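/- arXiv:math/0604521 — 11 statements merged into one kernel-verified Lean document; each statement's English description precedes it below -/
import Mathlib

section
/- If A and B are n×n nonsingular integer matrices, then D(A·B) ≤ D(A)·D(B). -/
open Matrix Finset

/-- `D(M) = Σ_j max(0, max_i (−m_{ij})) + max(0, max_i Σ_j m_{ij})`,
the degree of the projective monomial map associated to the integer matrix `M`. -/
def Dmat {n : ℕ} (M : Matrix (Fin n) (Fin n) ℤ) : ℤ :=
  (∑ j : Fin n, Finset.univ.fold max 0 (fun i : Fin n => -M i j)) +
    Finset.univ.fold max 0 (fun i : Fin n => ∑ j : Fin n, M i j)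

theorem fold_nonneg_aux {n : ℕ} (f : Fin n → ℤ) : 0 ≤ Finset.univ.fold max 0 f :=
  Finset.le_fold_max 0 |>.2 (Or.inl le_rfl)

theorem le_fold_aux {n : ℕ} (f : Fin n → ℤ) (i : Fin n) : f i ≤ Finset.univ.fold max 0 f :=
  Finset.le_fold_max _ |>.2 (Or.inr ⟨i, Finset.mem_univ _, le_rfl⟩)

theorem key_aux {n : ℕ} (A : Matrix (Fin n) (Fin n) ℤ) (x : Fin n → ℤ) (y : ℤ)
    (hy : 0 ≤ y) (hx : ∀ k, 0 ≤ x k + y) :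
    Finset.univ.fold max 0 (fun i : Fin n => -∑ k, A i k * x k) ≤
      (∑ k, Finset.univ.fold max 0 (fun i : Fin n => -A i k) * x k) + Dmat A * y := by
  unfold Dmat
  have ha : ∀ i k, -A i k ≤ Finset.univ.fold max 0 (fun i : Fin n => -A i k) :=
    fun i k => le_fold_aux (fun i : Fin n => -A i k) i
  have ha' : ∀ k, 0 ≤ Finset.univ.fold max 0 (fun i : Fin n => -A i k) :=
    fun k => fold_nonneg_aux _
  have h0 := fold_nonneg_aux (fun i : Fin n => ∑ j : Fin n, A i j)
  have h1 := le_fold_aux (fun i : Fin n => ∑ j : Fin n, A i j)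
  generalize Finset.univ.fold max 0 (fun i : Fin n => ∑ j : Fin n, A i j) = a0 at *
  generalize hg : (fun k => Finset.univ.fold max 0 (fun i : Fin n => -A i k)) = a at *
  have hg' : ∀ k, Finset.univ.fold max 0 (fun i : Fin n => -A i k) = a k :=
    fun k => congrFun hg k
  simp only [hg'] at *
  refine Finset.fold_max_le _ |>.2 ⟨?_, fun i _ => ?_⟩
  · have h : 0 ≤ ∑ k, a k * (x k + y) :=
      Finset.sum_nonneg fun k _ => mul_nonneg (ha' k) (hx k)
    simp only [mul_add, Finset.sum_add_distrib, ← Finset.sum_mul] at h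
    nlinarith [mul_nonneg h0 hy]
  · have h : 0 ≤ ∑ k, (a k + A i k) * (x k + y) :=
      Finset.sum_nonneg fun k _ => mul_nonneg (by linarith [ha i k]) (hx k)
    simp only [mul_add, add_mul, Finset.sum_add_distrib, ← Finset.sum_mul] at h
    have h2 := mul_le_mul_of_nonneg_right (h1 i) hy
    linarith

/-- Submultiplicativity of the degree of monomial maps: `D(A·B) ≤ D(A)·D(B)`. -/
theorem D_mul_le {n : ℕ} (A B : Matrix (Fin n) (Fin n) ℤ)
    (hA : A.det ≠ 0) (hB : B.det ≠ 0) :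
    Dmat (A * B) ≤ Dmat A * Dmat B := by
  have e1 := fun j => key_aux A (fun k => B k j)
    (Finset.univ.fold max 0 (fun i : Fin n => -B i j)) (fold_nonneg_aux _)
    (fun k => by linarith [le_fold_aux (fun i : Fin n => -B i j) k])
  have e2 := key_aux A (fun k => -∑ j, B k j)
    (Finset.univ.fold max 0 (fun i : Fin n => ∑ j, B i j)) (fold_nonneg_aux _)
    (fun k => by linarith [le_fold_aux (fun i : Fin n => ∑ j, B i j) k])
  have e3 := Finset.sum_le_sum fun j (_ : j ∈ Finset.univ) => e1 j
  have e4 : ∀ i, ∑ j, (A * B) i j = -∑ k, A i k * -∑ j, B k j := by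
    intro i
    simp only [Matrix.mul_apply, mul_neg, Finset.sum_neg_distrib, neg_neg, Finset.mul_sum]
    exact Finset.sum_comm
  have e5 : Dmat (A * B) = (∑ j, Finset.univ.fold max 0
      (fun i : Fin n => -∑ k, A i k * B k j)) +
      Finset.univ.fold max 0 (fun i : Fin n => -∑ k, A i k * -∑ j, B k j) := by
    simp only [← e4]
    rfl
  rw [e5]
  refine (add_le_add e3 e2).trans (le_of_eq ?_)
  rw [Finset.sum_add_distrib, Finset.sum_comm]
  simp only [← Finset.mul_sum, mul_neg, Finset.sum_neg_distrib]
  conv_rhs => rw [Dmat.eq_def B]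
  ring
end

section
/- If A is an n×n nonsingular integer matrix (n ≥ 1), then the sequence (1/N)·log D(A^N) converges as N → ∞. (Thus the algebraic entropy of the monomial map associated with A is well-defined.) -/
open Matrix Finset Filter

lemma fold_aux {n : ℕ} (f : Fin n → ℤ) :
    0 ≤ Finset.univ.fold max 0 f ∧ (∀ i, f i ≤ Finset.univ.fold max 0 f) ∧
    ∀ c, 0 ≤ c → (∀ i, f i ≤ c) → Finset.univ.fold max 0 f ≤ c := by
  have h := (Finset.fold_max_le (s := Finset.univ) (f := f) (b := 0)
    (Finset.univ.fold max 0 f)).1 le_rfl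
  refine ⟨h.1, fun i => h.2 i (Finset.mem_univ i), fun c h0 hc => ?_⟩
  exact (Finset.fold_max_le c).2 ⟨h0, fun i _ => hc i⟩

lemma Dmat_mul_le {n : ℕ} (A B : Matrix (Fin n) (Fin n) ℤ) :
    Dmat (A * B) ≤ Dmat A * Dmat B := by
  set a : Fin n → ℤ := fun j => Finset.univ.fold max 0 (fun i : Fin n => -A i j) with ha
  set s : ℤ := Finset.univ.fold max 0 (fun i : Fin n => ∑ j : Fin n, A i j) with hs
  set b : Fin n → ℤ := fun j => Finset.univ.fold max 0 (fun i : Fin n => -B i j) with hb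
  set t : ℤ := Finset.univ.fold max 0 (fun i : Fin n => ∑ j : Fin n, B i j) with ht
  have hDA : Dmat A = ∑ j, a j + s := rfl
  have hDB : Dmat B = ∑ j, b j + t := rfl
  have a0 : ∀ j, 0 ≤ a j := fun j => (fold_aux _).1
  have b0 : ∀ j, 0 ≤ b j := fun j => (fold_aux _).1
  have s0 : 0 ≤ s := (fold_aux _).1
  have t0 : 0 ≤ t := (fold_aux _).1
  have a1 : ∀ i j, -A i j ≤ a j := fun i j => (fold_aux (fun i => -A i j)).2.1 i
  have b1 : ∀ i j, -B i j ≤ b j := fun i j => (fold_aux (fun i => -B i j)).2.1 i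
  have s1 : ∀ i, ∑ j, A i j ≤ s := fun i => (fold_aux (fun i => ∑ j, A i j)).2.1 i
  have t1 : ∀ i, ∑ j, B i j ≤ t := fun i => (fold_aux (fun i => ∑ j, B i j)).2.1 i
  -- general estimate
  have key : ∀ (v : Fin n → ℤ) (c : ℤ), 0 ≤ c → (∀ k, -v k ≤ c) →
      0 ≤ ∑ k, a k * v k + Dmat A * c ∧
      ∀ i, -∑ k, A i k * v k ≤ ∑ k, a k * v k + Dmat A * c := by
    intro v c hc hv
    constructor
    · have h1 : 0 ≤ ∑ k, a k * (v k + c) :=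
        Finset.sum_nonneg fun k _ => mul_nonneg (a0 k) (by linarith [hv k])
      simp only [mul_add, Finset.sum_add_distrib, ← Finset.sum_mul] at h1
      rw [hDA]
      nlinarith [mul_nonneg s0 hc]
    · intro i
      have h1 : 0 ≤ ∑ k, (a k + A i k) * (v k + c) :=
        Finset.sum_nonneg fun k _ => mul_nonneg (by linarith [a1 i k]) (by linarith [hv k])
      simp only [mul_add, add_mul, Finset.sum_add_distrib, ← Finset.sum_mul] at h1
      rw [hDA]
      nlinarith [mul_le_mul_of_nonneg_right (s1 i) hc]
  have hcol : ∀ j, Finset.univ.fold max 0 (fun i : Fin n => -(A * B) i j)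
      ≤ ∑ k, a k * B k j + Dmat A * b j := by
    intro j
    obtain ⟨h1, h2⟩ := key (fun k => B k j) (b j) (b0 j) (fun k => b1 k j)
    exact (fold_aux _).2.2 _ h1 (fun i => by rw [Matrix.mul_apply]; exact h2 i)
  have hrow : Finset.univ.fold max 0 (fun i : Fin n => ∑ j, (A * B) i j)
      ≤ ∑ k, a k * (-∑ j, B k j) + Dmat A * t := by
    obtain ⟨h1, h2⟩ := key (fun k => -∑ j, B k j) t t0 (fun k => by simpa using t1 k)
    refine (fold_aux _).2.2 _ h1 (fun i => ?_)
    refine le_trans (le_of_eq ?_) (h2 i)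
    simp only [Matrix.mul_apply, mul_neg, Finset.sum_neg_distrib, neg_neg, Finset.mul_sum]
    exact Finset.sum_comm
  have h3 := Finset.sum_le_sum (s := Finset.univ) (fun j _ => hcol j)
  have h4 : ∑ j, ∑ k, a k * B k j = ∑ k, a k * ∑ j, B k j := by
    simp only [Finset.mul_sum]
    exact Finset.sum_comm
  rw [Finset.sum_add_distrib, h4, ← Finset.mul_sum] at h3
  simp only [mul_neg, Finset.sum_neg_distrib] at hrow
  have h5 : Dmat (A * B) = ∑ j, Finset.univ.fold max 0 (fun i : Fin n => -(A * B) i j)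
    + Finset.univ.fold max 0 (fun i : Fin n => ∑ j, (A * B) i j) := rfl
  rw [h5, hDB, mul_add]
  linarith

lemma Dmat_pos {n : ℕ} (hn : 1 ≤ n) (M : Matrix (Fin n) (Fin n) ℤ) (hM : M.det ≠ 0) :
    1 ≤ Dmat M := by
  by_contra hlt
  apply hM
  have h0 : ∀ j, 0 ≤ Finset.univ.fold max 0 (fun i : Fin n => -M i j) :=
    fun j => (fold_aux _).1
  have hs0 := Finset.sum_nonneg (s := Finset.univ) (fun j _ => h0 j)
  have hr0 := (fold_aux (fun i => ∑ j, M i j)).1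
  unfold Dmat at hlt
  have hs : ∑ j, Finset.univ.fold max 0 (fun i : Fin n => -M i j) = 0 := by linarith
  have hr : Finset.univ.fold max 0 (fun i : Fin n => ∑ j, M i j) = 0 := by linarith
  rw [Finset.sum_eq_zero_iff_of_nonneg (fun j _ => h0 j)] at hs
  have hnn : ∀ i j, 0 ≤ M i j := fun i j => by
    have h1 := (fold_aux (fun i => -M i j)).2.1 i
    rw [hs j (Finset.mem_univ j)] at h1
    linarith
  apply Matrix.det_eq_zero_of_row_eq_zero (⟨0, hn⟩ : Fin n)
  intro j
  have h2 := (fold_aux (fun i => ∑ j, M i j)).2.1 ⟨0, hn⟩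
  rw [hr] at h2
  have h3 := Finset.single_le_sum (f := fun j => M ⟨0, hn⟩ j) (fun j _ => hnn _ j)
    (Finset.mem_univ j)
  exact le_antisymm (h3.trans h2) (hnn _ j)

/-- The algebraic entropy `lim (1/N) log D(A^N)` of the monomial map associated
with a nonsingular integer matrix `A` is well-defined. -/
theorem algebraicEntropy_exists {n : ℕ} (hn : 1 ≤ n) (A : Matrix (Fin n) (Fin n) ℤ)
    (hA : A.det ≠ 0) :
    ∃ L : ℝ, Tendsto (fun N : ℕ => (1 / (N : ℝ)) * Real.log ((Dmat (A ^ N) : ℝ)))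
      atTop (nhds L) := by
  have hp : ∀ N : ℕ, (1 : ℝ) ≤ (Dmat (A ^ N) : ℝ) := fun N => by
    exact_mod_cast Dmat_pos hn (A ^ N) (by rw [Matrix.det_pow]; exact pow_ne_zero _ hA)
  have hsub : Subadditive (fun N : ℕ => Real.log ((Dmat (A ^ N) : ℝ))) := by
    intro p q
    have h1 := hp p
    have h2 := hp q
    have h3 := hp (p + q)
    show Real.log _ ≤ Real.log _ + Real.log _
    rw [← Real.log_mul (by linarith) (by linarith)]
    apply Real.log_le_log (by linarith)
    rw [pow_add]
    exact_mod_cast Dmat_mul_le (A ^ p) (A ^ q)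
  refine ⟨hsub.lim, ?_⟩
  have hb : BddBelow (Set.range fun N : ℕ => Real.log ((Dmat (A ^ N) : ℝ)) / N) := by
    refine ⟨0, ?_⟩
    rintro _ ⟨N, rfl⟩
    exact div_nonneg (Real.log_nonneg (hp N)) (Nat.cast_nonneg N)
  refine (hsub.tendsto_lim hb).congr fun N => ?_
  rw [one_div, div_eq_inv_mul]
end

section
/- If A is an n×n nonsingular integer matrix (n ≥ 1), then lim_{N→∞} (1/N)·log D(A^N) = log ρ(A), where ρ(A) is the spectral radius of A. Equivalently, D(A^N)^{1/N} → ρ(A) as N → ∞. (The algebraic entropy of the monomial map associated with A equals the logarithm of the spectral radius of A.) -/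
open Matrix Finset Filter

/-- The spectral radius of an integer matrix: the maximum of `|λ|` over the complex
roots `λ` (with multiplicity) of its characteristic polynomial. -/
noncomputable def specRad {n : ℕ} (A : Matrix (Fin n) (Fin n) ℤ) : ℝ :=
  Multiset.fold max 0 (((A.map (Int.cast : ℤ → ℂ)).charpoly.roots).map (fun z : ℂ => ‖z‖))

attribute [local instance] Matrix.linftyOpNormedRing Matrix.linftyOpNormedAlgebra

lemma aux_mfold_ge (s : Multiset ℝ) : 0 ≤ Multiset.fold max 0 s ∧
    ∀ x ∈ s, x ≤ Multiset.fold max 0 s := by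
  induction s using Multiset.induction with
  | empty => simp
  | cons a s ih =>
    rw [Multiset.fold_cons_left]
    refine ⟨ih.1.trans (le_max_right _ _), ?_⟩
    intro x hx
    rcases Multiset.mem_cons.1 hx with rfl | hx
    · exact le_max_left _ _
    · exact (ih.2 x hx).trans (le_max_right _ _)

lemma aux_mfold_le (s : Multiset ℝ) (c : ℝ) (hc : 0 ≤ c) (h : ∀ x ∈ s, x ≤ c) :
    Multiset.fold max 0 s ≤ c := by
  induction s using Multiset.induction with
  | empty => simpa using hc
  | cons a s ih =>
    rw [Multiset.fold_cons_left]
    exact max_le (h a (Multiset.mem_cons_self a s))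
      (ih fun x hx => h x (Multiset.mem_cons_of_mem hx))

lemma aux_row_le {n : ℕ} (M : Matrix (Fin n) (Fin n) ℤ) (i : Fin n) :
    (∑ j, |M i j|) ≤ 2 * Dmat M := by
  have h1 : ∑ j, M i j ≤ Finset.univ.fold max 0 (fun i : Fin n => ∑ j : Fin n, M i j) :=
    (Finset.le_fold_max _).2 (Or.inr ⟨i, Finset.mem_univ i, le_rfl⟩)
  have h0 : 0 ≤ Finset.univ.fold max 0 (fun i : Fin n => ∑ j : Fin n, M i j) :=
    (Finset.le_fold_max _).2 (Or.inl le_rfl)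
  have h2 : ∑ j, |M i j| ≤ ∑ j, (M i j +
      2 * Finset.univ.fold max 0 (fun i : Fin n => -M i j)) := by
    refine Finset.sum_le_sum fun j _ => ?_
    have a1 : -M i j ≤ Finset.univ.fold max 0 (fun i : Fin n => -M i j) :=
      (Finset.le_fold_max _).2 (Or.inr ⟨i, Finset.mem_univ i, le_rfl⟩)
    have a0 : 0 ≤ Finset.univ.fold max 0 (fun i : Fin n => -M i j) :=
      (Finset.le_fold_max _).2 (Or.inl le_rfl)
    rw [abs_le]
    constructor <;> linarith
  rw [Finset.sum_add_distrib, ← Finset.mul_sum] at h2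
  unfold Dmat
  linarith

lemma aux_D_le {n : ℕ} (M : Matrix (Fin n) (Fin n) ℤ) (c : ℤ) (hc : 0 ≤ c)
    (h : ∀ i, ∑ j, |M i j| ≤ c) : Dmat M ≤ (n + 1) * c := by
  have h1 : Finset.univ.fold max 0 (fun i : Fin n => ∑ j : Fin n, M i j) ≤ c := by
    refine (Finset.fold_max_le _).2 ⟨hc, fun i _ => ?_⟩
    exact (Finset.sum_le_sum fun j _ => le_abs_self _).trans (h i)
  have h2 : ∑ j : Fin n, Finset.univ.fold max 0 (fun i : Fin n => -M i j) ≤ ∑ j : Fin n, c := by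
    refine Finset.sum_le_sum fun j _ => (Finset.fold_max_le _).2 ⟨hc, fun i _ => ?_⟩
    refine (neg_le_abs _).trans ((Finset.single_le_sum (f := fun j => |M i j|)
      (fun j _ => abs_nonneg _) (Finset.mem_univ j)).trans (h i))
  simp at h2
  unfold Dmat
  linarith

lemma aux_norm {n : ℕ} (hn : 1 ≤ n) (M : Matrix (Fin n) (Fin n) ℤ) :
    ∃ i, (∀ k, ∑ j, |M k j| ≤ ∑ j, |M i j|) ∧
      ‖M.map (Int.cast : ℤ → ℂ)‖ = ((∑ j, |M i j| : ℤ) : ℝ) := by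
  have : Nonempty (Fin n) := ⟨⟨0, hn⟩⟩
  obtain ⟨i, -, hi⟩ := Finset.exists_max_image (Finset.univ : Finset (Fin n))
    (fun i => ∑ j, |M i j|) Finset.univ_nonempty
  have hrow : ∀ k, ((∑ j, ‖M.map (Int.cast : ℤ → ℂ) k j‖₊ : NNReal) : ℝ) =
      ((∑ j, |M k j| : ℤ) : ℝ) := by
    intro k
    push_cast
    exact Finset.sum_congr rfl fun j _ => by simp
  refine ⟨i, fun k => hi k (Finset.mem_univ k), ?_⟩
  rw [Matrix.linfty_opNorm_def, ← hrow i]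
  congr 1
  apply le_antisymm
  · refine Finset.sup_le fun k _ => ?_
    rw [← NNReal.coe_le_coe, hrow, hrow]
    exact_mod_cast hi k (Finset.mem_univ k)
  · exact Finset.le_sup (f := fun k => ∑ j, ‖M.map (Int.cast : ℤ → ℂ) k j‖₊) (Finset.mem_univ i)

lemma aux_bound {n : ℕ} (hn : 1 ≤ n) (M : Matrix (Fin n) (Fin n) ℤ) :
    ‖M.map (Int.cast : ℤ → ℂ)‖ ≤ 2 * (Dmat M : ℝ) ∧
    (Dmat M : ℝ) ≤ (n + 1) * ‖M.map (Int.cast : ℤ → ℂ)‖ := by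
  obtain ⟨i, h1, h3⟩ := aux_norm hn M
  rw [h3]
  constructor
  · exact_mod_cast aux_row_le M i
  · exact_mod_cast aux_D_le M _ (Finset.sum_nonneg fun _ _ => abs_nonneg _) h1

lemma aux_specRad {n : ℕ} (A : Matrix (Fin n) (Fin n) ℤ) :
    spectralRadius ℂ (A.map (Int.cast : ℤ → ℂ)) = ENNReal.ofReal (specRad A) := by
  have hr : ∀ z : ℂ, z ∈ spectrum ℂ (A.map (Int.cast : ℤ → ℂ)) ↔
      z ∈ (A.map (Int.cast : ℤ → ℂ)).charpoly.roots := by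
    intro z
    rw [Matrix.mem_spectrum_iff_isRoot_charpoly, Polynomial.mem_roots
      (Matrix.charpoly_monic _).ne_zero]
  obtain ⟨g0, g1⟩ := aux_mfold_ge
    (((A.map (Int.cast : ℤ → ℂ)).charpoly.roots).map (fun z : ℂ => ‖z‖))
  apply le_antisymm
  · refine iSup₂_le fun z hz => ?_
    change ‖z‖ₑ ≤ _
    rw [← ofReal_norm]
    apply ENNReal.ofReal_le_ofReal
    exact g1 _ (Multiset.mem_map_of_mem _ ((hr z).1 hz))
  · by_cases ht : spectralRadius ℂ (A.map (Int.cast : ℤ → ℂ)) = ⊤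
    · simp [ht]
    apply ENNReal.ofReal_le_of_le_toReal
    apply aux_mfold_le _ _ ENNReal.toReal_nonneg
    intro x hx
    obtain ⟨z, hz, rfl⟩ := Multiset.mem_map.1 hx
    have : (‖z‖₊ : ENNReal) ≤ spectralRadius ℂ (A.map (Int.cast : ℤ → ℂ)) :=
      le_iSup₂ (f := fun z (_ : z ∈ spectrum ℂ (A.map (Int.cast : ℤ → ℂ))) => (‖z‖₊ : ENNReal))
        z ((hr z).2 hz)
    simpa using ENNReal.toReal_mono ht this

lemma aux_specRad_pos {n : ℕ} (hn : 1 ≤ n) (A : Matrix (Fin n) (Fin n) ℤ) (hA : A.det ≠ 0) :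
    0 < specRad A := by
  have : Nonempty (Fin n) := ⟨⟨0, hn⟩⟩
  obtain ⟨z, hz⟩ := spectrum.nonempty_of_isAlgClosed_of_finiteDimensional ℂ
    (A.map (Int.cast : ℤ → ℂ))
  have hu : IsUnit (A.map (Int.cast : ℤ → ℂ)) := by
    rw [Matrix.isUnit_iff_isUnit_det, isUnit_iff_ne_zero]
    have : (A.map (Int.cast : ℤ → ℂ)).det = (A.det : ℂ) :=
      ((Int.castRingHom ℂ).map_det A).symm
    rw [this]; exact_mod_cast hA
  have hz0 : z ≠ 0 := by
    rintro rfl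
    exact spectrum.zero_notMem ℂ hu hz
  have h2 : z ∈ (A.map (Int.cast : ℤ → ℂ)).charpoly.roots := by
    rwa [Polynomial.mem_roots (Matrix.charpoly_monic _).ne_zero,
      ← Matrix.mem_spectrum_iff_isRoot_charpoly]
  exact (norm_pos_iff.2 hz0).trans_le ((aux_mfold_ge _).2 _ (Multiset.mem_map_of_mem _ h2))

/-- The algebraic entropy of the monomial map associated with a nonsingular integer
matrix `A` equals the logarithm of the spectral radius of `A`. -/
theorem algebraicEntropy_eq_log_specRad {n : ℕ} (hn : 1 ≤ n)
    (A : Matrix (Fin n) (Fin n) ℤ) (hA : A.det ≠ 0) :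
    Tendsto (fun N : ℕ => (1 / (N : ℝ)) * Real.log ((Dmat (A ^ N) : ℝ)))
      atTop (nhds (Real.log (specRad A))) := by
  have : Nonempty (Fin n) := ⟨⟨0, hn⟩⟩
  have hpos := aux_specRad_pos hn A hA
  set B : Matrix (Fin n) (Fin n) ℂ := A.map (Int.cast : ℤ → ℂ) with hB
  have hpow : ∀ N, (A ^ N).map (Int.cast : ℤ → ℂ) = B ^ N := fun N =>
    map_pow (Int.castRingHom ℂ).mapMatrix A N
  have hBN : ∀ N, 0 < ‖B ^ N‖ := by
    intro N
    rw [norm_pos_iff]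
    intro h0
    have h1 : (A ^ N).map (Int.cast : ℤ → ℂ) = (0 : Matrix (Fin n) (Fin n) ℤ).map Int.cast := by
      rw [hpow, h0]; ext; simp
    have h2 : A ^ N = 0 := Matrix.map_injective Int.cast_injective h1
    have h3 := congrArg Matrix.det h2
    rw [Matrix.det_pow, Matrix.det_zero] at h3
    exact pow_ne_zero N hA h3
  have : CompleteSpace (Matrix (Fin n) (Fin n) ℂ) := FiniteDimensional.complete ℂ _
  have hG := spectrum.pow_norm_pow_one_div_tendsto_nhds_spectralRadius B
  rw [hB, aux_specRad, ← hB] at hG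
  have hG2 : Tendsto (fun N : ℕ => ‖B ^ N‖ ^ (1 / N : ℝ)) atTop (nhds (specRad A)) := by
    have := (ENNReal.tendsto_toReal ENNReal.ofReal_ne_top).comp hG
    rw [ENNReal.toReal_ofReal hpos.le] at this
    refine this.congr fun N => ?_
    exact ENNReal.toReal_ofReal (by positivity)
  have hL : Tendsto (fun N : ℕ => (1 / (N : ℝ)) * Real.log ‖B ^ N‖) atTop
      (nhds (Real.log (specRad A))) := by
    refine (hG2.log hpos.ne').congr fun N => ?_
    rw [Real.log_rpow (hBN N)]
  have hc : ∀ c : ℝ, Tendsto (fun N : ℕ => (1 / (N : ℝ)) * c + (1 / (N : ℝ)) * Real.log ‖B ^ N‖)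
      atTop (nhds (Real.log (specRad A))) := by
    intro c
    simpa using (tendsto_one_div_atTop_nhds_zero_nat (𝕜 := ℝ)).mul_const c |>.add hL
  refine tendsto_of_tendsto_of_tendsto_of_le_of_le (hc (-Real.log 2)) (hc (Real.log (n + 1)))
    (fun N => ?_) (fun N => ?_)
  · obtain ⟨h1, -⟩ := aux_bound hn (A ^ N)
    rw [hpow] at h1
    have hD : (0 : ℝ) < Dmat (A ^ N) := by linarith [hBN N]
    have := Real.log_le_log (hBN N) h1
    rw [Real.log_mul two_ne_zero hD.ne'] at this
    simp only
    rw [← mul_add]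
    exact mul_le_mul_of_nonneg_left (by linarith) (by positivity)
  · obtain ⟨h1, h2⟩ := aux_bound hn (A ^ N)
    rw [hpow] at h1 h2
    have hD : (0 : ℝ) < Dmat (A ^ N) := by linarith [hBN N]
    have := Real.log_le_log hD h2
    rw [Real.log_mul (by positivity) (hBN N).ne'] at this
    simp only
    rw [← mul_add]
    exact mul_le_mul_of_nonneg_left (by linarith) (by positivity)
end

section
/- If A is an n×n integer matrix with n ≥ 1, then the spectral radius ρ(A) of A, viewed as a real number, is integral over ℤ (an algebraic integer). (Hence the algebraic entropy of the monomial map associated with a nonsingular integer matrix is the logarithm of an algebraic integer.) -/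
open Matrix

theorem norm_isIntegral_aux {z : ℂ} (hz : IsIntegral ℤ z) : IsIntegral ℤ ‖z‖ := by
  have hc : IsIntegral ℤ ((starRingEnd ℂ) z) :=
    hz.map ((starRingEnd ℂ).toIntAlgHom)
  have hm := hz.mul hc
  rw [Complex.mul_conj'] at hm
  have h2 : IsIntegral ℤ ((‖z‖ : ℂ)) := IsIntegral.of_pow (n := 2) (by norm_num) hm
  exact (isIntegral_algHom_iff (Complex.ofRealHom.toIntAlgHom) Complex.ofReal_injective).1 h2

theorem fold_isIntegral_aux (s : Multiset ℝ) (h : ∀ x ∈ s, IsIntegral ℤ x) :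
    IsIntegral ℤ (Multiset.fold max 0 s) := by
  induction s using Multiset.induction_on with
  | empty => simpa using isIntegral_zero
  | cons a s ih =>
    rw [Multiset.fold_cons_left]
    have h1 := h a (Multiset.mem_cons_self a s)
    have h2 := ih (fun x hx => h x (Multiset.mem_cons_of_mem hx))
    rcases max_choice a (Multiset.fold max 0 s) with e | e <;> rw [e] <;> assumption

/-- The spectral radius of an integer matrix is an algebraic integer. -/
theorem specRad_isIntegral {n : ℕ} (hn : 1 ≤ n) (A : Matrix (Fin n) (Fin n) ℤ) :
    IsIntegral ℤ (specRad A) := by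
  unfold specRad
  apply fold_isIntegral_aux
  intro x hx
  obtain ⟨z, hz, rfl⟩ := Multiset.mem_map.1 hx
  apply norm_isIntegral_aux
  refine ⟨A.charpoly, A.charpoly_monic, ?_⟩
  have hr := Polynomial.isRoot_of_mem_roots hz
  have e : (A.map (Int.cast : ℤ → ℂ)).charpoly = A.charpoly.map (Int.castRingHom ℂ) :=
    Matrix.charpoly_map A (Int.castRingHom ℂ)
  rw [e, Polynomial.IsRoot, Polynomial.eval_map] at hr
  exact hr
end

section
/- Let A = (a_{ij}) be an n×n nonsingular integer matrix. Define the (n+1)×(n+1) integer matrix A' by: A'_{ij} = a_{ij} for 1 ≤ i,j ≤ n; A'_{i,n+1} = −Σ_{j=1}^n a_{ij} for 1 ≤ i ≤ n; and A'_{n+1,j} = 0 for all 1 ≤ j ≤ n+1. Define B_{ij} := A'_{ij} − min_{1≤k≤n+1} A'_{kj}. Then: (i) every entry of B is a nonnegative integer; (ii) every column of B contains a zero entry; and (iii) every row sum of B equals D(A). (B is the exponent matrix of the n+1 homogeneous monomials, with no joint common factor, representing the projectivized monomial map of A; its common row sum is the degree of that map, so the degree equals D(A).) -/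
open Matrix Finset

/-- The `(n+1)×(n+1)` matrix `A'`: the upper left `n×n` block is `A`, the last column of
the first `n` rows consists of the negated row sums of `A`, and the last row is zero. -/
def Aext {n : ℕ} (A : Matrix (Fin n) (Fin n) ℤ) :
    Matrix (Fin (n + 1)) (Fin (n + 1)) ℤ := fun i j =>
  if hi : (i : ℕ) < n then
    if hj : (j : ℕ) < n then A ⟨i, hi⟩ ⟨j, hj⟩
    else -(∑ j' : Fin n, A ⟨i, hi⟩ j')
  else 0

/-- `B_{ij} = A'_{ij} − min_k A'_{kj}`: the exponent matrix of the `n+1` homogeneous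
monomials representing the projectivized monomial map of `A`. -/
def Bexp {n : ℕ} (A : Matrix (Fin n) (Fin n) ℤ) :
    Matrix (Fin (n + 1)) (Fin (n + 1)) ℤ := fun i j =>
  Aext A i j - Finset.univ.inf' Finset.univ_nonempty (fun k : Fin (n + 1) => Aext A k j)

theorem inf_eq_neg_fold {n : ℕ} (g : Fin (n + 1) → ℤ) (h : Fin n → ℤ)
    (h0 : g (Fin.last n) = 0) (hg : ∀ i : Fin n, g i.castSucc = - h i) :
    Finset.univ.inf' Finset.univ_nonempty g = - Finset.univ.fold max 0 h := by
  apply eq_of_forall_le_iff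
  intro c
  rw [Finset.le_inf'_iff, le_neg, Finset.fold_max_le]
  constructor
  · intro H
    refine ⟨?_, fun i _ => ?_⟩
    · have := H (Fin.last n) (Finset.mem_univ _)
      omega
    · have := H i.castSucc (Finset.mem_univ _)
      rw [hg] at this
      omega
  · rintro ⟨H0, H⟩ i -
    refine Fin.lastCases ?_ (fun i => ?_) i
    · omega
    · have := H i (Finset.mem_univ _)
      rw [hg]
      omega

theorem Aext_row_sum {n : ℕ} (A : Matrix (Fin n) (Fin n) ℤ) (i : Fin (n + 1)) :
    ∑ j : Fin (n + 1), Aext A i j = 0 := by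
  rw [Fin.sum_univ_castSucc]
  refine Fin.lastCases ?_ (fun i => ?_) i <;> simp [Aext]

/-- The exponent matrix of the projectivization of the monomial map of `A` has
nonnegative entries, a zero in every column (no joint common factor), and all row sums
equal to `D(A)` (the common degree of the monomials). -/
theorem exponentMatrix_spec {n : ℕ} (A : Matrix (Fin n) (Fin n) ℤ) (hA : A.det ≠ 0) :
    (∀ i j, 0 ≤ Bexp A i j) ∧
    (∀ j, ∃ i, Bexp A i j = 0) ∧
    (∀ i, ∑ j : Fin (n + 1), Bexp A i j = Dmat A) := by
  refine ⟨fun i j => ?_, fun j => ?_, fun i => ?_⟩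
  · exact sub_nonneg.2 (Finset.inf'_le _ (Finset.mem_univ i))
  · obtain ⟨i, _, hi⟩ := Finset.exists_mem_eq_inf' (Finset.univ_nonempty)
      (fun k : Fin (n + 1) => Aext A k j)
    exact ⟨i, sub_eq_zero.2 hi.symm⟩
  · have h1 : ∀ j : Fin n, Finset.univ.inf' Finset.univ_nonempty
        (fun k : Fin (n + 1) => Aext A k j.castSucc)
        = - Finset.univ.fold max 0 (fun i : Fin n => -A i j) := fun j =>
      inf_eq_neg_fold _ _ (by simp [Aext]) (by simp [Aext])
    have h2 : Finset.univ.inf' Finset.univ_nonempty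
        (fun k : Fin (n + 1) => Aext A k (Fin.last n))
        = - Finset.univ.fold max 0 (fun i : Fin n => ∑ j : Fin n, A i j) :=
      inf_eq_neg_fold _ _ (by simp [Aext]) (by simp [Aext])
    unfold Bexp
    rw [Finset.sum_sub_distrib, Aext_row_sum, Fin.sum_univ_castSucc, h2,
      Finset.sum_congr rfl (fun j _ => h1 j), Finset.sum_neg_distrib, Dmat]
    ring
end

section
/- Let B be an (n+1)×(n+1) matrix of nonnegative integers and let f : ℂ^{n+1} → ℂ^{n+1} be the map f(x)_i = Π_{j=1}^{n+1} x_j^{B_{ij}}. If x ∈ ℂ^{n+1} satisfies f^{(k)}(x) ≠ 0 (i.e., the k-th iterate of f at x is not the zero vector) for every 0 ≤ k ≤ 2^{n+1}, then f^{(k)}(x) ≠ 0 for every k ≥ 0. (Hence if the first 2^{n+1} iterates of a point under a projective monomial map on ℂP^n are well-defined, then all iterates are well-defined.) -/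
open Matrix Finset Function

/-- If the first `2^{n+1}` iterates of a point under a homogeneous monomial map on
`ℂ^{n+1}` are nonzero (so the corresponding iterates of the projective monomial map
on `ℂP^n` are well-defined), then all iterates are nonzero. -/
theorem monomial_iterates_welldefined {n : ℕ}
    (B : Matrix (Fin (n + 1)) (Fin (n + 1)) ℕ)
    (f : (Fin (n + 1) → ℂ) → Fin (n + 1) → ℂ)
    (hf : ∀ x i, f x i = ∏ j : Fin (n + 1), x j ^ (B i j))
    (x : Fin (n + 1) → ℂ)
    (hx : ∀ k ≤ 2 ^ (n + 1), f^[k] x ≠ 0) :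
    ∀ k : ℕ, f^[k] x ≠ 0 := by
  classical
  let supp : (Fin (n + 1) → ℂ) → Finset (Fin (n + 1)) := fun y => univ.filter (fun i => y i ≠ 0)
  let g : Finset (Fin (n + 1)) → Finset (Fin (n + 1)) :=
    fun S => univ.filter (fun i => ∀ j, B i j ≠ 0 → j ∈ S)
  have hsc : Function.Semiconj supp f g := by
    intro y
    ext i
    simp only [supp, g, mem_filter, mem_univ, true_and, hf, Finset.prod_ne_zero_iff, ne_eq,
      pow_eq_zero_iff', not_and_or, not_not]
    refine forall_congr' fun j => ?_
    simp only [forall_const]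
    tauto
  have hit : ∀ k, supp (f^[k] x) = g^[k] (supp x) := fun k => (hsc.iterate_right k) x
  have h0 : ∀ y, y = 0 ↔ supp y = ∅ := by
    intro y
    simp [supp, Finset.filter_eq_empty_iff, funext_iff]
  have key : ∀ k, f^[k] x = 0 ↔ g^[k] (supp x) = ∅ := fun k => by rw [h0, hit]
  obtain ⟨a, ha, b, hb, hab, he⟩ := Finset.exists_ne_map_eq_of_card_lt_of_maps_to
    (s := Finset.range (2 ^ (n + 1) + 1)) (t := (univ : Finset (Finset (Fin (n + 1)))))
    (f := fun k => g^[k] (supp x)) (by simp) (by intro _ _; simp)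
  have main : ∀ a b, a < b → b ≤ 2 ^ (n + 1) → g^[a] (supp x) = g^[b] (supp x) →
      ∀ k : ℕ, f^[k] x ≠ 0 := by
    intro a b hab hb he k
    induction k using Nat.strong_induction_on with
    | _ k ih =>
      by_cases hk : k ≤ 2 ^ (n + 1)
      · exact hx k hk
      · have h1 := ih (k - b + a) (by omega)
        rw [ne_eq, key] at h1 ⊢
        rw [iterate_add_apply, he, ← iterate_add_apply, Nat.sub_add_cancel (by omega)] at h1
        exact h1
  simp only [Finset.mem_range] at ha hb
  rcases lt_or_gt_of_ne hab with h | h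
  · exact main a b h (by omega) he
  · exact main b a h (by omega) he.symm
end

section
/- Let A be the 3×3 integer matrix with rows (−1,1,0), (−1,0,1), (1,0,0), and let d_N := D(A^N) for N ≥ 0. Then the sequence (d_N)_{N≥0} does not satisfy any linear recurrence with constant coefficients: there is no k ≥ 1 and real numbers c_1,…,c_k such that d_{N+k} = c_1 d_{N+k−1} + ⋯ + c_k d_N for all N ≥ 0. -/
open Matrix Finset

namespace DegSeq

lemma lin_zero {V : Type*} [AddCommGroup V] [Module ℝ V] [FiniteDimensional ℝ V]
    (T : V →ₗ[ℝ] V) (L : V →ₗ[ℝ] ℝ) (x : V)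
    (h : ∀ n < Module.finrank ℝ V, L ((T ^ n) x) = 0) (n : ℕ) : L ((T ^ n) x) = 0 := by
  nontriviality V
  rw [LinearMap.pow_eq_aeval_mod_charpoly, Polynomial.aeval_eq_sum_range' (n := Module.finrank ℝ V)]
  · rw [LinearMap.sum_apply, map_sum]
    apply Finset.sum_eq_zero
    intro i hi
    rw [LinearMap.smul_apply, map_smul, h i (Finset.mem_range.1 hi), smul_zero]
  · rw [← LinearMap.charpoly_natDegree T]
    apply Polynomial.natDegree_modByMonic_lt _ (LinearMap.charpoly_monic T)
    intro h1
    have := LinearMap.charpoly_natDegree T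
    rw [h1] at this
    simp at this
    have := Module.finrank_pos (R := ℝ) (M := V)
    omega

lemma tuple_step (E : LinearRecurrence ℝ) (f : ℕ → ℝ) (hf : E.IsSolution f) (N : ℕ) :
    E.tupleSucc (fun i => f (N + i)) = fun i : Fin E.order => f (N + 1 + i) := by
  ext i
  simp only [LinearRecurrence.tupleSucc, LinearMap.coe_mk, AddHom.coe_mk]
  split_ifs with h
  · congr 1; omega
  · rw [← hf N]; congr 1; omega

lemma seq_eq (E F : LinearRecurrence ℝ) (f g : ℕ → ℝ) (hf : E.IsSolution f) (hg : F.IsSolution g)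
    (hE : 0 < E.order) (hF : 0 < F.order) :
    ∃ m : ℕ, ∀ q r : ℕ, (∀ n < m, f (q * n + r) = g (q * n + r)) →
      ∀ n, f (q * n + r) = g (q * n + r) := by
  let V := (Fin E.order → ℝ) × (Fin F.order → ℝ)
  let T : V →ₗ[ℝ] V := E.tupleSucc.prodMap F.tupleSucc
  let L : V →ₗ[ℝ] ℝ := (LinearMap.proj (R := ℝ) (φ := fun _ : Fin E.order => ℝ) ⟨0, hE⟩).comp (LinearMap.fst ℝ _ _) -
    (LinearMap.proj (R := ℝ) (φ := fun _ : Fin F.order => ℝ) ⟨0, hF⟩).comp (LinearMap.snd ℝ _ _)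
  let x : ℕ → V := fun N => (fun i => f (N + i), fun i => g (N + i))
  have hT : ∀ N, T (x N) = x (N + 1) := by
    intro N
    exact Prod.ext (tuple_step E f hf N) (tuple_step F g hg N)
  have hTn : ∀ n N, (T ^ n) (x N) = x (n + N) := by
    intro n
    induction n with
    | zero => intro N; simp
    | succ k ih =>
      intro N
      rw [pow_succ', Module.End.mul_apply, ih, hT]; congr 1; omega
  have hL : ∀ N, L (x N) = f N - g N := by
    intro N
    change f (N + 0) - g (N + 0) = _
    simp
  refine ⟨Module.finrank ℝ V, fun q r h n => ?_⟩
  have key : ∀ n, L (((T ^ q) ^ n) (x r)) = f (q * n + r) - g (q * n + r) := by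
    intro n
    rw [← pow_mul, hTn, hL]
  have := lin_zero (T ^ q) L (x r) (fun n hn => by rw [key, h n hn, sub_self]) n
  rw [key] at this
  linarith

/-- analytic contradiction -/
lemma no_pos (ω C : ℂ) (c β : ℝ) (h0 : 0 < β) (h1 : β < 1) (hω : 1 < ‖ω‖) (him : ω.im ≠ 0)
    (hx : ∀ n : ℕ, 1 ≤ (C * ω ^ n).re + c * β ^ n) : False := by
  set ρ := ‖ω‖ with hρ
  have hρ0 : 0 < ρ := by linarith
  set e : ℂ := ω / ρ with he
  have hρC : (ρ : ℂ) ≠ 0 := by exact_mod_cast hρ0.ne'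
  have hen : ‖e‖ = 1 := by
    rw [he, norm_div, Complex.norm_real, ← hρ, Real.norm_of_nonneg hρ0.le, div_self hρ0.ne']
  have heim : e.im ≠ 0 := by
    rw [he, Complex.div_ofReal_im]
    exact div_ne_zero him hρ0.ne'
  have he1 : e ≠ 1 := by
    intro h; rw [h] at heim; simp at heim
  have hωn : ∀ n, (C * ω ^ n).re / ρ ^ n = (C * e ^ n).re := by
    intro n
    rw [he, div_pow, ← mul_div_assoc, ← Complex.ofReal_pow, Complex.div_ofReal_re]
  set γ := β / ρ with hγ
  have hγ0 : 0 < γ := by positivity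
  have hγ1 : γ < 1 := by rw [hγ, div_lt_one hρ0]; linarith
  let z : ℕ → ℝ := fun n => (C * e ^ n).re + c * γ ^ n
  have hz : ∀ n, 0 ≤ z n := by
    intro n
    have : z n = ((C * ω ^ n).re + c * β ^ n) / ρ ^ n := by
      simp only [z]
      rw [add_div, hωn, hγ, div_pow β ρ, mul_div_assoc]
    rw [this]
    have := hx n
    positivity
  have hsum : Summable z := by
    apply summable_of_sum_range_le (c := ‖C‖ * (2 / ‖e - 1‖) + |c| * (1 - γ)⁻¹) hz
    intro n
    simp only [z]
    rw [Finset.sum_add_distrib]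
    apply add_le_add
    · rw [← Complex.re_sum, ← Finset.mul_sum, geom_sum_eq he1]
      refine (Complex.re_le_norm _).trans ?_
      rw [norm_mul, norm_div]
      gcongr
      refine (norm_sub_le _ _).trans ?_
      rw [norm_pow, hen]; norm_num
    · rw [← Finset.mul_sum]
      have hg : ∑ i ∈ Finset.range n, γ ^ i ≤ (1 - γ)⁻¹ := by
        rw [← tsum_geometric_of_lt_one hγ0.le hγ1]
        exact (summable_geometric_of_lt_one hγ0.le hγ1).sum_le_tsum _ (fun i _ => by positivity)
      have hg0 : 0 ≤ ∑ i ∈ Finset.range n, γ ^ i := by positivity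
      calc c * _ ≤ |c| * ∑ i ∈ Finset.range n, γ ^ i := by gcongr; exact le_abs_self c
        _ ≤ _ := by gcongr
  have hz0 := hsum.tendsto_atTop_zero
  have hγt : Filter.Tendsto (fun n : ℕ => c * γ ^ n) Filter.atTop (nhds 0) := by
    simpa using (tendsto_pow_atTop_nhds_zero_of_lt_one hγ0.le hγ1).const_mul c
  have hre : Filter.Tendsto (fun n : ℕ => (C * e ^ n).re) Filter.atTop (nhds 0) := by
    have := hz0.sub hγt
    simpa [z] using this
  have hre1 := (Filter.tendsto_add_atTop_iff_nat 1).2 hre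
  have him0 : Filter.Tendsto (fun n : ℕ => (C * e ^ n).im) Filter.atTop (nhds 0) := by
    have h := ((hre.mul_const e.re).sub hre1).mul_const (e.im)⁻¹
    simp only [zero_mul, sub_self] at h
    refine h.congr fun n => ?_
    rw [pow_succ, ← mul_assoc, Complex.mul_re (C * e ^ n) e]
    field_simp
    ring
  have hC : C = 0 := by
    have h := (hre.mul hre).add (him0.mul him0)
    have h2 : ∀ n : ℕ, (C * e ^ n).re * (C * e ^ n).re + (C * e ^ n).im * (C * e ^ n).im
        = ‖C‖ ^ 2 := by
      intro n
      rw [← Complex.normSq_apply, Complex.normSq_eq_norm_sq, norm_mul, norm_pow, hen]; simp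
    simp only [h2] at h
    have := tendsto_nhds_unique h tendsto_const_nhds
    simpa using this.symm
  have hβt : Filter.Tendsto (fun n : ℕ => c * β ^ n) Filter.atTop (nhds 0) := by
    simpa using (tendsto_pow_atTop_nhds_zero_of_lt_one h0.le h1).const_mul c
  have := ge_of_tendsto' hβt (b := 1) (fun n => by simpa [hC] using hx n)
  linarith

lemma int_seq (p : ℕ → ℝ) (a b c : ℤ) (h : ∀ n, p (n + 3) = a * p (n + 2) + b * p (n + 1) + c * p n)
    (h0 : ∃ m : ℤ, p 0 = m) (h1 : ∃ m : ℤ, p 1 = m) (h2 : ∃ m : ℤ, p 2 = m) (n : ℕ) :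
    ∃ m : ℤ, p n = m := by
  suffices H : (∃ m : ℤ, p n = m) ∧ (∃ m : ℤ, p (n + 1) = m) ∧ (∃ m : ℤ, p (n + 2) = m) from H.1
  induction n with
  | zero => exact ⟨h0, h1, h2⟩
  | succ n ih =>
    obtain ⟨⟨x, hx⟩, ⟨y, hy⟩, ⟨z, hz⟩⟩ := ih
    refine ⟨⟨y, hy⟩, ⟨z, hz⟩, ⟨a * z + b * y + c * x, ?_⟩⟩
    have := h n
    rw [hx, hy, hz] at this
    rw [show n + 1 + 2 = n + 3 by ring, this]; push_cast; ring

lemma exists_roots : ∃ (α : ℝ) (ζ : ℂ), 0 < α ∧ α < 1 ∧ α ^ 3 + α ^ 2 + α - 1 = 0 ∧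
    2 * ζ.re = -(1 + α) ∧ ζ.re ^ 2 + ζ.im ^ 2 = 1 + α + α ^ 2 ∧ ζ.im ≠ 0 := by
  have hc : ContinuousOn (fun t : ℝ => t ^ 3 + t ^ 2 + t - 1) (Set.Icc 0 1) := by fun_prop
  obtain ⟨α, ⟨h0, h1⟩, h⟩ := intermediate_value_Icc (by norm_num : (0:ℝ) ≤ 1) hc
    (show (0:ℝ) ∈ _ by constructor <;> norm_num)
  simp only at h
  have h0' : 0 < α := by
    rcases h0.lt_or_eq with h2 | h2
    · exact h2
    · rw [← h2] at h; norm_num at h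
  have h1' : α < 1 := by
    rcases h1.lt_or_eq with h2 | h2
    · exact h2
    · rw [h2] at h; norm_num at h
  have hp : 0 < (1 + α + α ^ 2) - ((1 + α) / 2) ^ 2 := by nlinarith
  refine ⟨α, ⟨-(1 + α) / 2, √((1 + α + α ^ 2) - ((1 + α) / 2) ^ 2)⟩, h0', h1', h, ?_, ?_, ?_⟩
  · simp; ring
  · simp only [Real.sq_sqrt hp.le]; ring
  · simpa using (Real.sqrt_pos.2 hp).ne'

section
variable (α : ℝ) (ζ : ℂ) (h0 : 0 < α) (h1 : α < 1) (hα : α ^ 3 + α ^ 2 + α - 1 = 0)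
  (hr : 2 * ζ.re = -(1 + α)) (hn : ζ.re ^ 2 + ζ.im ^ 2 = 1 + α + α ^ 2) (hi : ζ.im ≠ 0)

include hr hn in
lemma zeta_quad : ζ ^ 2 = -(1 + α) * ζ - (1 + α + α ^ 2) := by
  have e1 : ζ.im ^ 2 = 1 + α + α ^ 2 - ζ.re ^ 2 := by linarith
  apply Complex.ext
  · simp [pow_two]; nlinarith
  · simp [pow_two]
    have : ζ.im * (2 * ζ.re) = ζ.im * (-(1 + α)) := by rw [hr]
    linarith

include hα hr hn in
lemma zeta_cubic : ζ ^ 3 = -ζ ^ 2 - ζ + 1 := by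
  have q := zeta_quad α ζ hr hn
  have : (α : ℂ) ^ 3 + α ^ 2 + α - 1 = 0 := by exact_mod_cast hα
  linear_combination (ζ - α) * q + this

include hα hr hn hi in
lemma seq_repr (s : ℕ → ℝ) (hs : ∀ n, s (n + 3) = -s (n + 2) - s (n + 1) + s n) :
    ∃ (C : ℂ) (c : ℝ), ∀ n, s n = (C * ζ ^ n).re + c * α ^ n := by
  have hden : 0 < 3 * α ^ 2 + 2 * α + 1 := by nlinarith [sq_nonneg (α + 1), sq_nonneg α]
  set c : ℝ := (s 2 + (1 + α) * s 1 + (1 + α + α ^ 2) * s 0) / (3 * α ^ 2 + 2 * α + 1) with hc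
  have hc' : c * (3 * α ^ 2 + 2 * α + 1) = s 2 + (1 + α) * s 1 + (1 + α + α ^ 2) * s 0 := by
    rw [hc]; exact div_mul_cancel₀ _ hden.ne'
  -- C * ζ re
  let x := s 0 - c
  let y := (x * ζ.re - (s 1 - c * α)) / ζ.im
  have hy : y * ζ.im = x * ζ.re - (s 1 - c * α) := by simp only [y]; field_simp
  let C : ℂ := ⟨x, y⟩
  refine ⟨C, c, fun n => ?_⟩
  have e0 : s 0 = (C * ζ ^ 0).re + c * α ^ 0 := by simp [C, x]
  have e1 : s 1 = (C * ζ ^ 1).re + c * α ^ 1 := by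
    simp only [pow_one, Complex.mul_re, C]; linarith
  have q := zeta_quad α ζ hr hn
  have e2 : s 2 = (C * ζ ^ 2).re + c * α ^ 2 := by
    have : C * ζ ^ 2 = ((-(1 + α) : ℝ) : ℂ) * (C * ζ ^ 1) - ((1 + α + α ^ 2 : ℝ) : ℂ) * (C * ζ ^ 0) := by
      rw [q]; push_cast; ring
    rw [this, Complex.sub_re, Complex.re_ofReal_mul, Complex.re_ofReal_mul]
    have a0 : (C * ζ ^ 0).re = s 0 - c := by rw [e0]; ring
    have a1 : (C * ζ ^ 1).re = s 1 - c * α := by rw [e1]; ring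
    rw [a0, a1]
    linarith
  suffices H : (s n = (C * ζ ^ n).re + c * α ^ n) ∧
      (s (n + 1) = (C * ζ ^ (n + 1)).re + c * α ^ (n + 1)) ∧
      (s (n + 2) = (C * ζ ^ (n + 2)).re + c * α ^ (n + 2)) from H.1
  induction n with
  | zero => exact ⟨e0, e1, e2⟩
  | succ n ih =>
    obtain ⟨i0, i1, i2⟩ := ih
    refine ⟨i1, i2, ?_⟩
    rw [show n + 1 + 2 = n + 3 by ring, hs, i0, i1, i2]
    have : C * ζ ^ (n + 3) = -(C * ζ ^ (n + 2)) - C * ζ ^ (n + 1) + C * ζ ^ n := by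
      linear_combination C * ζ ^ n * zeta_cubic α ζ hα hr hn
    rw [this, Complex.add_re, Complex.sub_re, Complex.neg_re]
    linear_combination (- c * α ^ n) * hα

include h0 h1 hα hr hn in
lemma zeta_pow_im (q : ℕ) (hq : 0 < q) : (ζ ^ q).im ≠ 0 := by
  intro him
  set w := (ζ ^ q).re with hw
  set β := α ^ q with hβ
  have hβ0 : 0 < β := by positivity
  have hβ1 : β < 1 := pow_lt_one₀ h0.le h1 hq.ne'
  have hns : Complex.normSq ζ = α⁻¹ := by
    rw [Complex.normSq_apply]
    apply eq_inv_of_mul_eq_one_left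
    linear_combination α * hn + hα
  have hw2 : w ^ 2 * β = 1 := by
    have : Complex.normSq (ζ ^ q) = w ^ 2 := by
      rw [Complex.normSq_apply, him, ← hw]; ring
    rw [← this, map_pow, hns, hβ, ← mul_pow, inv_mul_cancel₀ h0.ne', one_pow]
  have hw0 : w ≠ 0 := by rintro h; rw [h] at hw2; norm_num at hw2
  have cub := zeta_cubic α ζ hα hr hn
  have hζ0 : ζ ≠ 0 := by
    intro h; rw [h] at cub; norm_num at cub
  -- power sums
  obtain ⟨τ, hτ⟩ : ∃ m : ℤ, 2 * w + β = m := by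
    refine int_seq (fun n => 2 * (ζ ^ n).re + α ^ n) (-1) (-1) 1 ?_ ⟨3, ?_⟩ ⟨-1, ?_⟩ ⟨-1, ?_⟩ q
    · intro n
      have : ζ ^ (n + 3) = -(ζ ^ (n + 2)) - ζ ^ (n + 1) + ζ ^ n := by
        linear_combination ζ ^ n * cub
      simp only [this, Complex.add_re, Complex.sub_re, Complex.neg_re]
      push_cast
      linear_combination α ^ n * hα
    · norm_num
    · simp; linarith
    · simp [pow_two]; nlinarith
  obtain ⟨σ, hσ⟩ : ∃ m : ℤ, w ^ 2 + 2 * w * β = m := by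
    have hinv : (ζ⁻¹) ^ 3 = (ζ⁻¹) ^ 2 + ζ⁻¹ + 1 := by
      field_simp; linear_combination -cub
    have hinva : (α⁻¹) ^ 3 = (α⁻¹) ^ 2 + α⁻¹ + 1 := by
      field_simp; linear_combination -hα
    have hzi : (ζ⁻¹).re = ζ.re * α := by
      rw [Complex.inv_re, hns]; field_simp
    have hzi2 : (ζ⁻¹).im = - ζ.im * α := by
      rw [Complex.inv_im, hns]; field_simp
    have hai : α⁻¹ = 1 + α + α ^ 2 := by
      field_simp; linear_combination -hα
    have h2 := int_seq (fun n => 2 * ((ζ⁻¹) ^ n).re + (α⁻¹) ^ n) 1 1 1 ?_ ⟨3, ?_⟩ ⟨1, ?_⟩ ⟨3, ?_⟩ q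
    · obtain ⟨m, hm⟩ := h2
      refine ⟨m, ?_⟩
      rw [← hm]
      have hz : ζ ^ q = (w : ℂ) := Complex.ext (by simp [hw]) (by simp [him])
      have : ((ζ⁻¹) ^ q).re = w⁻¹ := by
        rw [inv_pow, hz, ← Complex.ofReal_inv, Complex.ofReal_re]
      have hβi : (α⁻¹) ^ q = w ^ 2 := by
        rw [inv_pow, ← hβ]; exact inv_eq_of_mul_eq_one_left hw2
      have hwi : w⁻¹ = w * β := by
        apply inv_eq_of_mul_eq_one_right; linear_combination hw2
      simp only [this, hβi, hwi]
      ring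
    · intro n
      have : ζ⁻¹ ^ (n + 3) = ζ⁻¹ ^ (n + 2) + ζ⁻¹ ^ (n + 1) + ζ⁻¹ ^ n := by
        linear_combination ζ⁻¹ ^ n * hinv
      simp only [this, Complex.add_re]
      push_cast
      linear_combination α⁻¹ ^ n * hinva
    · norm_num
    · simp only [pow_one, hzi, hai]; push_cast
      linear_combination α * hr
    · simp only [pow_two, Complex.mul_re, hzi, hzi2, hai]; push_cast
      have : ζ.im ^ 2 = 1 + α + α ^ 2 - ζ.re ^ 2 := by linarith
      have hre : ζ.re = -(1 + α) / 2 := by linarith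
      rw [hre] at this ⊢
      have h4 : α ^ 4 = α - α^2 - α^3 := by linear_combination α * hα
      have h3 : α ^ 3 = 1 - α - α^2 := by linear_combination hα
      linear_combination (-2 * α ^ 2) * this + (2) * hα
  -- w rational
  have hne : w - β ≠ 0 := by
    intro h
    have : w = β := by linarith
    rw [this] at hw2
    nlinarith [pow_lt_one₀ hβ0.le hβ1 (n := 3) (by norm_num)]
  have hwr : w * (2 * ((τ : ℝ) ^ 2 - 3 * σ)) = τ * σ - 9 := by
    rw [← hτ, ← hσ]
    linear_combination (-9) * hw2
  have hd : (τ : ℝ) ^ 2 - 3 * σ = (w - β) ^ 2 := by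
    rw [← hτ, ← hσ]; ring
  have hd0 : (2 * ((τ : ℝ) ^ 2 - 3 * σ)) ≠ 0 := by
    rw [hd]; positivity
  have hβq : ∃ b : ℚ, (b : ℝ) = β := by
    refine ⟨τ - 2 * ((τ * σ - 9) / (2 * ((τ : ℚ) ^ 2 - 3 * σ))), ?_⟩
    push_cast
    rw [← hwr, mul_div_cancel_right₀ _ hd0]
    linarith
  obtain ⟨b, hb⟩ := hβq
  have hint : IsIntegral ℤ β := by
    apply IsIntegral.pow
    refine ⟨Polynomial.X ^ 3 + Polynomial.X ^ 2 + Polynomial.X - 1, ?_, ?_⟩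
    · monicity!
    · simp; linarith
  have hintb : IsIntegral ℤ b := by
    rw [← hb] at hint
    exact (isIntegral_algebraMap_iff (algebraMap ℚ ℝ).injective).1 hint
  obtain ⟨m, hm⟩ := IsIntegrallyClosed.isIntegral_iff.1 hintb
  have hmβ : (m : ℝ) = β := by rw [← hb, ← hm]; simp
  rw [← hmβ] at hβ0 hβ1
  have : 0 < m := by exact_mod_cast hβ0
  have : m < 1 := by exact_mod_cast hβ1
  omega

end

abbrev A : Matrix (Fin 3) (Fin 3) ℤ := !![-1, 1, 0; -1, 0, 1; 1, 0, 0]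

lemma A_cube : A ^ 3 = -A ^ 2 - A + 1 := by decide

abbrev Col := (Fin 3 → Option (Fin 3)) × Option (Fin 3)

def ell (c : Col) (M : Matrix (Fin 3) (Fin 3) ℤ) : ℤ :=
  (∑ j : Fin 3, (c.1 j).elim 0 (fun i => -M i j)) + c.2.elim 0 (fun i => ∑ j : Fin 3, M i j)

lemma fold_choice (f : Fin 3 → ℤ) : ∃ o : Option (Fin 3),
    Finset.univ.fold max 0 f = o.elim 0 f := by
  have h := (Finset.le_fold_max (s := Finset.univ) (b := 0) (f := f)
    (Finset.univ.fold max 0 f)).1 le_rfl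
  rcases h with h | ⟨i, -, h⟩
  · exact ⟨none, le_antisymm h ((Finset.le_fold_max _).2 (Or.inl le_rfl))⟩
  · exact ⟨some i, le_antisymm h ((Finset.le_fold_max _).2 (Or.inr ⟨i, Finset.mem_univ _, le_rfl⟩))⟩

lemma exists_col (M : Matrix (Fin 3) (Fin 3) ℤ) : ∃ c : Col, Dmat M = ell c M := by
  choose o ho using fun j : Fin 3 => fold_choice (fun i => -M i j)
  obtain ⟨p, hp⟩ := fold_choice (fun i => ∑ j, M i j)
  refine ⟨(o, p), ?_⟩
  unfold Dmat ell
  rw [hp]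
  simp only [ho]

lemma ell_rec (c : Col) (n : ℕ) :
    ell c (A ^ (n + 3)) = -ell c (A ^ (n + 2)) - ell c (A ^ (n + 1)) + ell c (A ^ n) := by
  have h : A ^ (n + 3) = -A ^ (n + 2) - A ^ (n + 1) + A ^ n := by
    rw [pow_add, A_cube, pow_add, pow_succ A n]; noncomm_ring
  rw [h]
  generalize A ^ (n + 2) = X
  generalize A ^ (n + 1) = Y
  generalize A ^ n = Z
  have e1 : ∀ (o : Option (Fin 3)) (j : Fin 3), o.elim 0 (fun i => -(-X - Y + Z) i j) =
      -o.elim 0 (fun i => -X i j) - o.elim 0 (fun i => -Y i j) + o.elim 0 (fun i => -Z i j) := by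
    rintro (_ | i) j
    · simp
    · simp; ring
  have e2 : ∀ (o : Option (Fin 3)), o.elim 0 (fun i => ∑ j, (-X - Y + Z) i j) =
      -o.elim 0 (fun i => ∑ j, X i j) - o.elim 0 (fun i => ∑ j, Y i j)
        + o.elim 0 (fun i => ∑ j, Z i j) := by
    rintro (_ | i)
    · simp
    · simp [Finset.sum_add_distrib]
  unfold ell
  simp only [e1, e2, Finset.sum_add_distrib, Finset.sum_sub_distrib, Finset.sum_neg_distrib]
  ring

lemma Dmat_pos (N : ℕ) : 1 ≤ Dmat (A ^ N) := by
  by_contra hlt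
  have hA : A ^ N ≠ 0 := by
    intro h
    have h2 : (A ^ N).det = 1 := by
      rw [Matrix.det_pow, show A.det = 1 by simp [Matrix.det_fin_three], one_pow]
    rw [h] at h2
    simp at h2
  generalize A ^ N = M at *
  have n1 : ∀ f : Fin 3 → ℤ, 0 ≤ Finset.univ.fold max 0 f :=
    fun f => (Finset.le_fold_max _).2 (Or.inl le_rfl)
  have n2 : ∀ (f : Fin 3 → ℤ) i, f i ≤ Finset.univ.fold max 0 f :=
    fun f i => (Finset.le_fold_max _).2 (Or.inr ⟨i, Finset.mem_univ _, le_rfl⟩)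
  apply hA
  unfold Dmat at hlt
  have hs : 0 ≤ ∑ j : Fin 3, Finset.univ.fold max 0 (fun i : Fin 3 => -M i j) :=
    Finset.sum_nonneg fun j _ => n1 _
  have ht := n1 (fun i => ∑ j, M i j)
  have hent : ∀ i j, 0 ≤ M i j := by
    intro i j
    have h1 := n2 (fun i => -M i j) i
    have h2 := Finset.single_le_sum (f := fun j => Finset.univ.fold max 0 (fun i : Fin 3 => -M i j))
      (fun j _ => n1 _) (Finset.mem_univ j)
    beta_reduce at h1 h2
    omega
  ext i j
  have h1 := n2 (fun i => ∑ j, M i j) i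
  have h2 := Finset.single_le_sum (f := fun j => M i j) (fun j _ => hent i j) (Finset.mem_univ j)
  have h3 := hent i j
  beta_reduce at h1 h2
  simp only [Matrix.zero_apply]
  omega

end DegSeq

/-- The degree sequence of the iterates of the monomial map
`(x,y,z) ↦ (y/x, z/x, x)` does not satisfy any linear recurrence with constant
coefficients. -/
theorem degSeq_no_linear_recurrence :
    ¬ ∃ k : ℕ, 1 ≤ k ∧ ∃ c : Fin k → ℝ,
      ∀ N : ℕ,
        ((Dmat ((!![-1, 1, 0; -1, 0, 1; 1, 0, 0] : Matrix (Fin 3) (Fin 3) ℤ) ^ (N + k)) : ℝ)) =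
          ∑ i : Fin k, c i *
            ((Dmat ((!![-1, 1, 0; -1, 0, 1; 1, 0, 0] : Matrix (Fin 3) (Fin 3) ℤ) ^
              (N + k - 1 - (i : ℕ))) : ℝ)) := by
  rintro ⟨k, hk, c, hrec⟩
  let f : ℕ → ℝ := fun N => (Dmat (DegSeq.A ^ N) : ℝ)
  let g : DegSeq.Col → ℕ → ℝ := fun t N => (DegSeq.ell t (DegSeq.A ^ N) : ℝ)
  let E : LinearRecurrence ℝ := ⟨k, fun i => c i.rev⟩
  let F : LinearRecurrence ℝ := ⟨3, ![1, -1, -1]⟩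
  have hE : E.IsSolution f := by
    intro N
    refine (hrec N).trans ?_
    refine Fintype.sum_equiv Fin.revPerm _ _ (fun i => ?_)
    simp only [E, f, Fin.revPerm_apply, Fin.rev_rev, Fin.val_rev]
    have : N + k - 1 - (i : ℕ) = N + (k - (i + 1)) := by omega
    rw [this]
  have hg : ∀ t n, g t (n + 3) = -g t (n + 2) - g t (n + 1) + g t n := by
    intro t n
    simp only [g]
    rw [DegSeq.ell_rec]; push_cast; ring
  have hF : ∀ t, F.IsSolution (g t) := by
    intro t n
    refine (hg t n).trans ?_
    refine Eq.trans ?_ (Fin.sum_univ_three (fun i : Fin 3 => F.coeffs i * g t (n + i))).symm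
    simp [F]
    try ring
  choose m hm using fun t => DegSeq.seq_eq E F f (g t) hE (hF t) hk (by norm_num [F])
  obtain ⟨K, hK⟩ := Finite.exists_le m
  choose col hcol using fun N => DegSeq.exists_col (DegSeq.A ^ N)
  obtain ⟨q, hq, r, t, hmono⟩ := Combinatorics.exists_mono_homothetic_copy
    (Finset.range K) col
  have hall := hm t q r (fun n hn => by
    have h1 := hmono n (Finset.mem_range.2 (hn.trans_le (hK t)))
    rw [smul_eq_mul] at h1
    simp only [f, g]
    rw [hcol, h1])
  obtain ⟨α, ζ, h0, h1, hα, hr, hn, hi⟩ := DegSeq.exists_roots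
  obtain ⟨C, d, hC⟩ := DegSeq.seq_repr α ζ hα hr hn hi (g t) (hg t)
  have hζ : 1 < ‖ζ‖ := by
    have : ‖ζ‖ ^ 2 = 1 + α + α ^ 2 := by
      rw [← Complex.normSq_eq_norm_sq, Complex.normSq_apply]; linarith
    nlinarith [norm_nonneg ζ, sq_nonneg α]
  refine DegSeq.no_pos (ζ ^ q) (C * ζ ^ r) (d * α ^ r) (α ^ q) (by positivity)
    (pow_lt_one₀ h0.le h1 hq.ne') ?_ (DegSeq.zeta_pow_im α ζ h0 h1 hα hr hn q hq) ?_
  · rw [norm_pow]; exact one_lt_pow₀ hζ hq.ne'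
  · intro n
    have h2 := hC (q * n + r)
    rw [← hall n] at h2
    have h3 : (1 : ℝ) ≤ f (q * n + r) := by
      simp only [f]; exact_mod_cast DegSeq.Dmat_pos _
    rw [h2] at h3
    refine h3.trans_eq ?_
    congr 1
    · congr 1; ring
    · ring
end

section
/- Let β be a complex root of the polynomial t³+t²+t−1 with nonzero imaginary part. Then for every integer m ≥ 1, β^m is not a real number. (Equivalently, writing β = r e^{iθ}, the angle θ is incommensurable with 2π.) -/
lemma aux_pow (m : ℕ) : ∃ p q s : ℤ, ∀ x : ℂ, x ^ 3 + x ^ 2 + x - 1 = 0 →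
    x ^ m = p + q * x + s * x ^ 2 := by
  induction m with
  | zero => exact ⟨1, 0, 0, fun x _ => by simp⟩
  | succ k ih =>
    obtain ⟨p, q, s, h⟩ := ih
    refine ⟨s, p - s, q - s, fun x hx => ?_⟩
    rw [pow_succ, h x hx]
    push_cast
    linear_combination (s : ℂ) * hx

lemma aux_rat (r : ℚ) (h : r ^ 3 + r ^ 2 + r - 1 = 0) : False := by
  have hi : IsIntegral ℤ r := by
    refine ⟨Polynomial.X ^ 3 + Polynomial.X ^ 2 + Polynomial.X - 1, by monicity!, ?_⟩
    simpa using h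
  obtain ⟨n, hn⟩ := IsIntegrallyClosed.isIntegral_iff.1 hi
  have hn' : (n : ℚ) = r := by simpa using hn
  rw [← hn'] at h
  have h2 : n ^ 3 + n ^ 2 + n - 1 = 0 := by exact_mod_cast h
  have h3 : n ∣ 1 := ⟨n ^ 2 + n + 1, by linarith⟩
  rcases Int.isUnit_iff.1 (isUnit_of_dvd_one h3) with rfl | rfl <;> norm_num at h2

/-- If `β` is a nonreal complex root of `t³+t²+t−1`, then no positive power of `β`
is real (i.e. the argument of `β` is incommensurable with `2π`). -/
theorem no_power_real_of_root (β : ℂ)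
    (hroot : β ^ 3 + β ^ 2 + β - 1 = 0) (him : β.im ≠ 0) :
    ∀ m : ℕ, 1 ≤ m → (β ^ m).im ≠ 0 := by
  intro m hm h0
  obtain ⟨p, q, s, h⟩ := aux_pow m
  have hre := congrArg Complex.re hroot
  have him' := congrArg Complex.im hroot
  simp [pow_succ] at hre him'
  have hβ := h β hroot
  have hq := congrArg Complex.im hβ
  rw [h0] at hq
  simp [pow_succ] at hq
  obtain ⟨a, ha⟩ : ∃ a, a = β.re := ⟨_, rfl⟩
  obtain ⟨b, hb⟩ : ∃ b, b = β.im := ⟨_, rfl⟩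
  rw [← hb] at him
  rw [← ha, ← hb] at hre him' hq
  have e1 : b ^ 2 = 3 * a ^ 2 + 2 * a + 1 := by
    apply mul_left_cancel₀ him
    linear_combination -him'
  have e2 : (q : ℝ) + 2 * a * s = 0 := by
    apply mul_left_cancel₀ him
    linear_combination -hq
  have e3 : (-1 - 2 * a) ^ 3 + (-1 - 2 * a) ^ 2 + (-1 - 2 * a) - 1 = 0 := by
    linear_combination hre + (3 * a + 1) * e1
  have e4 : (-1 - 2 * a) * (a ^ 2 + b ^ 2) = 1 := by
    linear_combination e3 + (-1 - 2 * a) * e1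
  have hs : s = 0 := by
    by_contra hs
    have hs' : (s : ℝ) ≠ 0 := by exact_mod_cast hs
    have e5 : -1 - 2 * a = ((-1 + q / s : ℚ) : ℝ) := by
      push_cast
      field_simp
      linear_combination -e2
    rw [e5] at e3
    exact aux_rat _ (by exact_mod_cast e3)
  subst hs
  have hq0 : q = 0 := by simpa using e2
  subst hq0
  have hα := h ((-1 - 2 * a : ℝ) : ℂ) (by exact_mod_cast e3)
  have heq : β ^ m = ((-1 - 2 * a : ℝ) : ℂ) ^ m := by rw [hα, hβ]; simp
  have hn := congrArg norm heq
  rw [norm_pow, norm_pow] at hn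
  have hn2 := (pow_left_inj₀ (norm_nonneg _) (norm_nonneg _) (by omega)).1 hn
  have hsq : a ^ 2 + b ^ 2 = (-1 - 2 * a) ^ 2 := by
    have h1 := Complex.sq_norm β
    rw [hn2, Complex.norm_real, Real.norm_eq_abs, sq_abs, Complex.normSq_apply] at h1
    rw [h1, ha, hb]; ring
  rw [hsq] at e4
  generalize -1 - 2 * a = t at e3 e4
  have : t ^ 2 + t = 0 := by linarith
  nlinarith
end

section
/- Let A be the 3×3 integer matrix with rows (−1,1,0), (−1,0,1), (1,0,0), let α be the real root of t³+t²+t−1 and β a nonreal complex root of t³+t²+t−1. If c₁, c₂, c₃ are complex numbers such that the (1,1) entry of A^N equals c₁α^N + c₂β^N + c₃(β̄)^N for every N ≥ 0 (β̄ the complex conjugate of β), then c₂ ≠ 0 and c₃ ≠ 0. -/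
open Matrix

/-- If the `(1,1)` entry of `A^N` (for `A` the matrix of the monomial map
`(x,y,z) ↦ (y/x, z/x, x)`) is written as `c₁α^N + c₂β^N + c₃β̄^N`, where `α` is the
real root and `β` a nonreal root of `t³+t²+t−1`, then `c₂ ≠ 0` and `c₃ ≠ 0`. -/
theorem coeffs_nonzero (α : ℝ) (hα : α ^ 3 + α ^ 2 + α - 1 = 0)
    (β : ℂ) (hβ : β ^ 3 + β ^ 2 + β - 1 = 0) (him : β.im ≠ 0)
    (c₁ c₂ c₃ : ℂ)
    (h : ∀ N : ℕ,
      (((!![-1, 1, 0; -1, 0, 1; 1, 0, 0] : Matrix (Fin 3) (Fin 3) ℤ) ^ N) 0 0 : ℂ) =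
        c₁ * (α : ℂ) ^ N + c₂ * β ^ N + c₃ * (starRingEnd ℂ β) ^ N) :
    c₂ ≠ 0 ∧ c₃ ≠ 0 := by
  have h1 := h 1
  have h2 := h 2
  have h3 := h 3
  simp [pow_succ, Matrix.mul_apply, Fin.sum_univ_three] at h1 h2 h3
  have key : ∀ γ : ℂ, γ.im ≠ 0 → (α : ℂ) * γ = 2 → False := by
    intro γ hγ e
    have e1 := congrArg Complex.im e
    have e2 := congrArg Complex.re e
    simp at e1 e2
    rcases e1 with e1 | e1
    · simp [e1] at e2
    · exact hγ e1
  constructor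
  · rintro rfl
    refine key (starRingEnd ℂ β) (by simpa using him) ?_
    linear_combination (α * (starRingEnd ℂ β) : ℂ) * (-h1) + (α + (starRingEnd ℂ β) : ℂ) * h2 - h3
  · rintro rfl
    refine key β him ?_
    linear_combination (α * β : ℂ) * (-h1) + (α + β : ℂ) * h2 - h3
end

section
/- Let A be an n×n nonsingular integer matrix (n ≥ 1) whose characteristic polynomial has a simple nonreal complex root λ such that λ/|λ| is not a root of unity (i.e., writing λ = r e^{iθ}, the angle θ is incommensurable with 2π), and such that every root μ of the characteristic polynomial with μ ≠ λ and μ ≠ λ̄ satisfies |μ| < |λ|. Then the sequence d_N := D(A^N) does not satisfy any linear recurrence with constant coefficients: there is no k ≥ 1 and real numbers c_1,…,c_k such that d_{N+k} = c_1 d_{N+k−1} + ⋯ + c_k d_N for all N ≥ 0. -/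
open Matrix Finset Polynomial

open Filter Topology in
lemma dns (u z : ℂ) (hu : ‖u‖ = 1) (hz : ‖z‖ = 1) (h : ∀ m : ℕ, 1 ≤ m → u ^ m ≠ 1) :
    MapClusterPt z atTop (fun N : ℕ => u ^ N) := by
  have : Fact (0 < 2 * Real.pi) := ⟨Real.two_pi_pos⟩
  have key : ∀ w : ℂ, ‖w‖ = 1 →
      ((AddCircle.toCircle ((w.arg : ℝ) : AddCircle (2 * Real.pi)) : Circle) : ℂ) = w := by
    intro w hw
    rw [AddCircle.toCircle_apply_mk]
    rw [div_self (by positivity), one_mul, Circle.coe_exp]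
    simpa [hw] using Complex.norm_mul_exp_arg_mul_I w
  set a : AddCircle (2 * Real.pi) := ((u.arg : ℝ) : AddCircle (2 * Real.pi)) with ha
  have h0 : addOrderOf a = 0 := by
    rw [addOrderOf_eq_zero_iff']
    intro n hn h1
    apply h n hn
    have h2 := congrArg (fun x => ((AddCircle.toCircle x : Circle) : ℂ)) h1
    simp only [AddCircle.toCircle_nsmul, AddCircle.toCircle_zero, Circle.coe_pow, Circle.coe_one] at h2
    rw [key u hu] at h2
    exact h2
  have h1 := AddCircle.denseRange_zsmul_iff.2 h0
  have h2 := (mapClusterPt_atTop_nsmul_tfae ((z.arg : ℝ) : AddCircle (2 * Real.pi)) a).out 3 0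
  have h3 := h2.1 (h1 _)
  have hc : Continuous (fun x : AddCircle (2 * Real.pi) => ((AddCircle.toCircle x : Circle) : ℂ)) :=
    continuous_subtype_val.comp AddCircle.continuous_toCircle
  have h4 := h3.continuousAt_comp hc.continuousAt
  rw [key z hz] at h4
  convert h4 using 1
  ext N
  simp only [Function.comp, AddCircle.toCircle_nsmul, Circle.coe_pow]
  rw [key u hu]

/-! PL functions -/
def PLf (f : ℂ → ℝ) : Prop :=
  Continuous f ∧ ∃ T : Set (ℂ →L[ℝ] ℝ), T.Finite ∧ ∀ z, ∃ L ∈ T, f z = L z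

lemma PLf.lin (L : ℂ →L[ℝ] ℝ) : PLf (fun z => L z) :=
  ⟨L.continuous, {L}, Set.finite_singleton _, fun _ => ⟨L, rfl, rfl⟩⟩

lemma PLf.zero : PLf (fun _ => (0 : ℝ)) := by
  simpa using PLf.lin 0

lemma PLf.max {f g : ℂ → ℝ} (hf : PLf f) (hg : PLf g) : PLf (fun z => max (f z) (g z)) := by
  obtain ⟨hf, T, hT, h1⟩ := hf
  obtain ⟨hg, S, hS, h2⟩ := hg
  refine ⟨hf.max hg, T ∪ S, hT.union hS, fun z => ?_⟩
  obtain ⟨L, hL, e1⟩ := h1 z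
  obtain ⟨M, hM, e2⟩ := h2 z
  rcases max_choice (f z) (g z) with h | h
  · exact ⟨L, Or.inl hL, h.trans e1⟩
  · exact ⟨M, Or.inr hM, h.trans e2⟩

lemma PLf.add {f g : ℂ → ℝ} (hf : PLf f) (hg : PLf g) : PLf (fun z => f z + g z) := by
  obtain ⟨hf, T, hT, h1⟩ := hf
  obtain ⟨hg, S, hS, h2⟩ := hg
  refine ⟨hf.add hg, Set.image2 (· + ·) T S, hT.image2 _ hS, fun z => ?_⟩
  obtain ⟨L, hL, e1⟩ := h1 z
  obtain ⟨M, hM, e2⟩ := h2 z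
  exact ⟨L + M, ⟨L, hL, M, hM, rfl⟩, by simp [e1, e2]⟩

lemma PLf.sum {ι : Type*} (s : Finset ι) {f : ι → ℂ → ℝ} (hf : ∀ i, PLf (f i)) :
    PLf (fun z => ∑ i ∈ s, f i z) := by
  classical
  induction s using Finset.induction_on with
  | empty => simpa using PLf.zero
  | insert a s ha ih => simpa [Finset.sum_insert ha] using (hf a).add ih

lemma PLf.fold {ι : Type*} (s : Finset ι) {f : ι → ℂ → ℝ} (hf : ∀ i, PLf (f i)) :
    PLf (fun z => s.fold Max.max 0 (fun i => f i z)) := by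
  classical
  induction s using Finset.induction_on with
  | empty => simpa using PLf.zero
  | insert a s ha ih => simpa [Finset.fold_insert ha] using (hf a).max ih

/-- locally linear at `z`. -/
def Reg (f : ℂ → ℝ) (z : ℂ) : Prop := ∃ L : ℂ →L[ℝ] ℝ, ∀ᶠ w in nhds z, f w = L w

lemma PLf.reg {f : ℂ → ℝ} (hf : PLf f) : ∃ F : Set (ℂ →L[ℝ] ℝ), F.Finite ∧ (∀ L ∈ F, L ≠ 0) ∧
    ∀ z, (∀ L ∈ F, L z ≠ 0) → Reg f z := by
  obtain ⟨hf, T, hT, h1⟩ := hf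
  refine ⟨Set.image2 (· - ·) T T \ {0}, (hT.image2 _ hT).sdiff, fun L hL => hL.2, fun z hz => ?_⟩
  obtain ⟨L, hL, e1⟩ := h1 z
  refine ⟨L, ?_⟩
  have h2 : ∀ M ∈ T, M ≠ L → ∀ᶠ w in nhds z, f w ≠ M w := by
    intro M hM hne
    have : f z ≠ M z := by
      intro h
      refine hz (L - M) ⟨⟨L, hL, M, hM, rfl⟩, ?_⟩ ?_
      · simpa [sub_eq_zero] using hne.symm
      · simp [← e1, h]
    exact (hf.continuousAt (x := z)).ne_iff_eventually_ne M.continuous.continuousAt |>.1 this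
  have h3 : ∀ᶠ w in nhds z, ∀ M ∈ T, M ≠ L → f w ≠ M w := by
    rw [Filter.eventually_all_finite hT]
    intro M hM
    by_cases h : M = L
    · simp [h]
    · filter_upwards [h2 M hM h] with w hw _ using hw
  filter_upwards [h3] with w hw
  obtain ⟨M, hM, e⟩ := h1 w
  by_cases h : M = L
  · rw [e, h]
  · exact absurd e (hw M hM h)

lemma exists_not_reg {f : ℂ → ℝ} (h0 : ∀ z, 0 ≤ f z) {z₀ : ℂ} (hz : z₀ ≠ 0) (hne : f z₀ ≠ 0) :
    ∃ z, z ≠ 0 ∧ ¬ Reg f z := by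
  by_contra! hcon
  have hd : ∀ z, z ≠ 0 → ∃ L : ℂ →L[ℝ] ℝ, ∀ᶠ w in nhds z, f w = L w := hcon
  have hfd : ∀ z (L : ℂ →L[ℝ] ℝ), (∀ᶠ w in nhds z, f w = L w) → fderiv ℝ f z = L := by
    intro z L h
    have : f =ᶠ[nhds z] L := h
    rw [this.fderiv_eq, L.fderiv]
  have hpre : IsPreconnected ({0}ᶜ : Set ℂ) :=
    (isConnected_compl_singleton_of_one_lt_rank (by simp) (0 : ℂ)).isPreconnected
  have hloc : ∀ z ∈ ({0}ᶜ : Set ℂ), ∀ᶠ w in nhdsWithin z ({0}ᶜ), fderiv ℝ f z = fderiv ℝ f w := by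
    intro z hz
    obtain ⟨L, hL⟩ := hd z hz
    refine Filter.Eventually.filter_mono nhdsWithin_le_nhds ?_
    filter_upwards [hL.eventually_nhds] with w hw
    rw [hfd z L hL, hfd w L hw]
  have hconst : ∀ z w : ℂ, z ≠ 0 → w ≠ 0 → fderiv ℝ f z = fderiv ℝ f w := by
    intro z w hz hw
    refine hpre.induction₂ (fun x y => fderiv ℝ f x = fderiv ℝ f y) hloc ?_ ?_ hz hw
    · exact fun x y z _ _ _ h1 h2 => h1.trans h2
    · exact fun x y _ _ h => h.symm
  have hv : ∀ z, z ≠ 0 → f z = fderiv ℝ f z z := by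
    intro z hz
    obtain ⟨L, hL⟩ := hd z hz
    rw [hfd z L hL]; exact hL.self_of_nhds
  have e1 := hv z₀ hz
  have e2 := hv (-z₀) (neg_ne_zero.2 hz)
  rw [hconst (-z₀) z₀ (neg_ne_zero.2 hz) hz, map_neg, ← e1] at e2
  have := h0 z₀; have := h0 (-z₀)
  exact hne (by linarith)

lemma cdecomp (w z : ℂ) : w * z = w.re • z + w.im • (Complex.I * z) := by
  apply Complex.ext <;> simp <;> ring

lemma pow_cancel {lam : ℂ} (h : lam ≠ 0) (a b q : ℕ) (e : q = a + b) (z : ℂ) :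
    lam ^ a * (lam⁻¹ ^ q * z) = lam⁻¹ ^ b * z := by
  rw [e, pow_add, ← mul_assoc, ← mul_assoc, ← mul_pow, mul_inv_cancel₀ h, one_pow, one_mul]

/-- same real line implies real ratio -/
lemma ratio_real (L : ℂ →L[ℝ] ℝ) (hL : L ≠ 0) (z w : ℂ) (hz : z ≠ 0) (h1 : L z = 0)
    (h2 : L (w * z) = 0) : w.im = 0 := by
  by_contra him
  apply hL
  have e1 := cdecomp w z
  rw [e1, map_add, map_smul, map_smul, h1] at h2
  have h3 : L (Complex.I * z) = 0 := by simpa [him] using h2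
  ext x
  have e2 := cdecomp (x / z) z
  rw [div_mul_cancel₀ x hz] at e2
  rw [e2]
  simp only [map_add, map_smul, h1, h3]
  simp

lemma no_func_eq {f : ℂ → ℝ} (hf : PLf f) (h0 : ∀ z, 0 ≤ f z) {z₀ : ℂ} (hz : z₀ ≠ 0)
    (hne : f z₀ ≠ 0) (lam : ℂ) (hlam : lam ≠ 0)
    (hirr : ∀ m : ℕ, 1 ≤ m → (lam ^ m).im ≠ 0) (k : ℕ) (c : Fin k → ℝ)
    (heq : ∀ z, z ≠ 0 → f (lam ^ k * z) = ∑ i : Fin k, c i * f (lam ^ (k - 1 - (i : ℕ)) * z)) :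
    False := by
  obtain ⟨F, hF, hF0, hreg⟩ := hf.reg
  obtain ⟨z₁, hz₁, hn₁⟩ := exists_not_reg h0 hz hne
  have step : ∀ z, z ≠ 0 → ¬ Reg f z → ∃ m : ℕ, 1 ≤ m ∧ ¬ Reg f ((lam⁻¹) ^ m * z) := by
    intro z hz hn
    by_contra! hall
    apply hn
    choose! L hL using hall
    refine ⟨∑ i : Fin k, c i • (L ((i : ℕ) + 1)).comp
      ((ContinuousLinearMap.mul ℝ ℂ) (lam⁻¹ ^ ((i : ℕ) + 1))), ?_⟩
    have hev : ∀ i : Fin k, ∀ᶠ w in nhds z,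
        f (lam⁻¹ ^ ((i : ℕ) + 1) * w) = L ((i : ℕ) + 1) (lam⁻¹ ^ ((i : ℕ) + 1) * w) := by
      intro i
      have hc : ContinuousAt (fun w : ℂ => lam⁻¹ ^ ((i : ℕ) + 1) * w) z := by fun_prop
      exact hc.eventually (hL ((i : ℕ) + 1) (by omega))
    filter_upwards [Filter.eventually_all.2 hev, eventually_ne_nhds hz] with w hw hw0
    have h3 := heq (lam⁻¹ ^ k * w) (mul_ne_zero (pow_ne_zero _ (inv_ne_zero hlam)) hw0)
    have e0 : lam ^ k * (lam⁻¹ ^ k * w) = w := by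
      rw [← mul_assoc, ← mul_pow, mul_inv_cancel₀ hlam, one_pow, one_mul]
    rw [e0] at h3
    rw [h3, _root_.sum_apply]
    refine Finset.sum_congr rfl fun i _ => ?_
    have e1 : lam ^ (k - 1 - (i : ℕ)) * (lam⁻¹ ^ k * w) = lam⁻¹ ^ ((i : ℕ) + 1) * w := by
      exact pow_cancel hlam _ _ _ (by have := i.2; omega) w
    rw [e1, hw i]
    simp
  -- infinitely many exponents
  have hinf : ∀ n : ℕ, ∃ m, n ≤ m ∧ ¬ Reg f (lam⁻¹ ^ m * z₁) := by
    intro n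
    induction n with
    | zero => exact ⟨0, le_rfl, by simpa using hn₁⟩
    | succ n ih =>
      obtain ⟨m, hm, h⟩ := ih
      obtain ⟨m', hm', h'⟩ := step _ (mul_ne_zero (pow_ne_zero _ (inv_ne_zero hlam)) hz₁) h
      refine ⟨m' + m, by omega, ?_⟩
      rwa [pow_add, mul_assoc]
  have hSinf : {m : ℕ | ¬ Reg f (lam⁻¹ ^ m * z₁)}.Infinite := by
    rw [Set.infinite_iff_exists_gt]
    intro a
    obtain ⟨m, hm, h⟩ := hinf (a + 1)
    exact ⟨m, h, by omega⟩
  have hsel : ∀ m, ∃ L : ℂ →L[ℝ] ℝ, ¬ Reg f (lam⁻¹ ^ m * z₁) → L ∈ F ∧ L (lam⁻¹ ^ m * z₁) = 0 := by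
    intro m
    by_cases h : Reg f (lam⁻¹ ^ m * z₁)
    · exact ⟨0, fun h' => absurd h h'⟩
    · have := mt (hreg (lam⁻¹ ^ m * z₁)) h
      push Not at this
      obtain ⟨L, h1, h2⟩ := this
      exact ⟨L, fun _ => ⟨h1, h2⟩⟩
  choose G hG using hsel
  obtain ⟨p, hp, q, hq, hpq, e⟩ := hSinf.exists_lt_map_eq_of_mapsTo (f := G) (t := F)
    (fun m hm => (hG m hm).1) hF
  have a1 := (hG p hp).2
  have a2 := (hG q hq).2
  rw [← e] at a2
  refine hirr (q - p) (by omega) (ratio_real (G p) (hF0 _ (hG p hp).1) (lam⁻¹ ^ q * z₁) _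
    (mul_ne_zero (pow_ne_zero _ (inv_ne_zero hlam)) hz₁) a2 ?_)
  rw [pow_cancel hlam (q - p) p q (by omega)]
  exact a1

open Filter Topology in
lemma decay_aux (e δ : ℕ → ℝ) (ρ : ℝ) (he : ∀ N, 0 ≤ e N) (h0 : 0 ≤ ρ) (h1 : ρ < 1)
    (hr : ∀ N, e (N + 1) ≤ ρ * e N + δ N) (hδ : Tendsto δ atTop (𝓝 0)) :
    Tendsto e atTop (𝓝 0) := by
  rw [Metric.tendsto_atTop]
  intro ε hε
  have h2 : ∀ᶠ N in atTop, δ N < (ε / 2) * (1 - ρ) :=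
    hδ.eventually (gt_mem_nhds (by apply mul_pos <;> linarith))
  obtain ⟨M, hM⟩ := eventually_atTop.1 h2
  have h3 : ∀ m, e (M + m) - ε / 2 ≤ ρ ^ m * e M := by
    intro m
    induction m with
    | zero => simp; linarith
    | succ m ih =>
      have a1 := hr (M + m)
      have a2 := hM (M + m) (by omega)
      have a3 := mul_le_mul_of_nonneg_left ih h0
      rw [pow_succ]
      rw [← add_assoc]
      nlinarith
  have h4 : Tendsto (fun m : ℕ => ρ ^ m * e M) atTop (𝓝 0) := by
    simpa using (tendsto_pow_atTop_nhds_zero_of_lt_one h0 h1).mul_const (e M)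
  obtain ⟨K, hK⟩ := eventually_atTop.1 (h4.eventually (gt_mem_nhds (half_pos hε)))
  refine ⟨M + K, fun N hN => ?_⟩
  have a1 := h3 (N - M)
  have a2 := hK (N - M) (by omega)
  rw [show M + (N - M) = N by omega] at a1
  rw [Real.dist_0_eq_abs, abs_of_nonneg (he N)]
  linarith

open Filter Topology in
lemma decay_lin (x : ℕ → ℂ) (mu : ℂ) (r : ℝ) (hr : 0 < r) (hmu : ‖mu‖ < r)
    (h : Tendsto (fun N => (x (N + 1) - mu * x N) / (r : ℂ) ^ N) atTop (𝓝 0)) :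
    Tendsto (fun N => x N / (r : ℂ) ^ N) atTop (𝓝 0) := by
  rw [tendsto_zero_iff_norm_tendsto_zero] at h ⊢
  have h' := h.const_mul (r⁻¹)
  rw [mul_zero] at h'
  refine decay_aux _ _ (‖mu‖ / r) (fun N => norm_nonneg _) (by positivity)
    ((div_lt_one hr).2 hmu) (fun N => ?_) h'
  have hrc : (r : ℂ) ≠ 0 := by exact_mod_cast hr.ne'
  have e : x (N + 1) / (r : ℂ) ^ (N + 1) = (mu / r) * (x N / (r : ℂ) ^ N) +
      (r : ℂ)⁻¹ * ((x (N + 1) - mu * x N) / (r : ℂ) ^ N) := by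
    field_simp
    ring
  rw [e]
  refine (norm_add_le _ _).trans (le_of_eq ?_)
  rw [norm_mul, norm_mul, norm_div mu, norm_inv, Complex.norm_of_nonneg hr.le]

section
open Filter Topology
variable {n : ℕ}

noncomputable def sqn (B : Matrix (Fin n) (Fin n) ℂ) (i j : Fin n) (g : ℂ[X]) (N : ℕ) : ℂ :=
  (aeval B (X ^ N * g)) i j

lemma sqn_zero_of_dvd (B : Matrix (Fin n) (Fin n) ℂ) (i j : Fin n) (g : ℂ[X]) (N : ℕ)
    (h : B.charpoly ∣ g) : sqn B i j g N = 0 := by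
  obtain ⟨q, rfl⟩ := h
  simp [sqn, Matrix.aeval_self_charpoly]

lemma sqn_step (B : Matrix (Fin n) (Fin n) ℂ) (i j : Fin n) (g : ℂ[X]) (mu : ℂ) (N : ℕ) :
    sqn B i j ((X - C mu) * g) N = sqn B i j g (N + 1) - mu * sqn B i j g N := by
  have : (X ^ N * ((X - C mu) * g) : ℂ[X]) = X ^ (N + 1) * g - mu • (X ^ N * g) := by
    rw [Polynomial.smul_eq_C_mul]; ring
  rw [sqn, this, map_sub, map_smul]
  simp [sqn]

lemma sqn_add (B : Matrix (Fin n) (Fin n) ℂ) (i j : Fin n) (g g' : ℂ[X]) (N : ℕ) :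
    sqn B i j (g + g') N = sqn B i j g N + sqn B i j g' N := by
  simp [sqn, mul_add]

lemma sqn_eig (B : Matrix (Fin n) (Fin n) ℂ) (i j : Fin n) (g : ℂ[X]) (mu : ℂ) (N : ℕ)
    (h : B.charpoly ∣ (X - C mu) * g) : sqn B i j g N = mu ^ N * sqn B i j g 0 := by
  induction N with
  | zero => simp
  | succ N ih =>
    have := sqn_step B i j g mu N
    rw [sqn_zero_of_dvd B i j _ N h] at this
    rw [pow_succ, mul_comm (mu ^ N), mul_assoc, ← ih]
    linear_combination -this

lemma sqn_decay (B : Matrix (Fin n) (Fin n) ℂ) (i j : Fin n) (r : ℝ) (hr : 0 < r)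
    (R : Multiset ℂ) (hR : ∀ mu ∈ R, ‖mu‖ < r) : ∀ g : ℂ[X],
    B.charpoly ∣ (R.map fun a => X - C a).prod * g →
    Tendsto (fun N => sqn B i j g N / (r : ℂ) ^ N) atTop (𝓝 0) := by
  induction R using Multiset.induction_on with
  | empty =>
    intro g hg
    have : ∀ N, sqn B i j g N = 0 := fun N => sqn_zero_of_dvd B i j g N (by simpa using hg)
    simp [this]
  | cons a R ih =>
    intro g hg
    refine decay_lin _ a r hr (hR a (Multiset.mem_cons_self a R)) ?_
    have := ih (fun mu h => hR mu (Multiset.mem_cons_of_mem h)) ((X - C a) * g) (by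
      rw [Multiset.map_cons, Multiset.prod_cons] at hg
      convert hg using 1; ring)
    simpa only [sqn_step] using this

lemma asym (B : Matrix (Fin n) (Fin n) ℂ) (l1 l2 : ℂ) (hne : l1 ≠ l2) (r : ℝ) (hr : 0 < r)
    (R : Multiset ℂ) (hR : ∀ mu ∈ R, ‖mu‖ < r) (h1 : l1 ∉ R) (h2 : l2 ∉ R)
    (hroots : B.charpoly.roots = l1 ::ₘ l2 ::ₘ R) (i j : Fin n) :
    ∃ a b : ℂ, Tendsto (fun N : ℕ => ((B ^ N) i j - (a * l1 ^ N + b * l2 ^ N)) / (r : ℂ) ^ N)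
      atTop (𝓝 0) := by
  set q : ℂ[X] := (R.map fun a => X - C a).prod with hq
  have hp : B.charpoly = (X - C l1) * ((X - C l2) * q) := by
    have := (IsAlgClosed.splits B.charpoly).eq_prod_roots_of_monic B.charpoly_monic
    rw [this, hroots]
    simp [hq]
  have hqe : ∀ l, l ∉ R → q.eval l ≠ 0 := by
    intro l hl
    rw [hq, Polynomial.eval_multiset_prod]
    apply Multiset.prod_ne_zero
    simp only [Multiset.map_map, Multiset.mem_map, Function.comp, not_exists, not_and]
    intro x hx h
    simp [sub_eq_zero] at h
    exact hl (h ▸ hx)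
  set e1 : ℂ[X] := C ((l1 - l2) * q.eval l1)⁻¹ * ((X - C l2) * q) with he1
  set e2 : ℂ[X] := C ((l2 - l1) * q.eval l2)⁻¹ * ((X - C l1) * q) with he2
  have hd : (X - C l1) * (X - C l2) ∣ 1 - e1 - e2 := by
    refine IsCoprime.mul_dvd (isCoprime_X_sub_C_of_isUnit_sub ?_) ?_ ?_
    · exact (sub_ne_zero.2 hne).isUnit
    · rw [dvd_iff_isRoot]
      have := sub_ne_zero.2 hne
      have := hqe l1 h1
      simp [he1, he2, IsRoot.def]
      field_simp
      simp
    · rw [dvd_iff_isRoot]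
      have := sub_ne_zero.2 hne.symm
      have := hqe l2 h2
      simp [he1, he2, IsRoot.def]
      field_simp
      simp
  refine ⟨sqn B i j e1 0, sqn B i j e2 0, ?_⟩
  have h3 := sqn_decay B i j r hr R hR (1 - e1 - e2) (by
    obtain ⟨w, hw⟩ := hd
    exact ⟨w, by rw [hw, hp, ← hq]; ring⟩)
  refine h3.congr fun N => ?_
  congr 1
  have a0 : sqn B i j 1 N = (B ^ N) i j := by simp [sqn]
  have a1 := sqn_eig B i j e1 l1 N ⟨C ((l1 - l2) * q.eval l1)⁻¹, by rw [hp, he1]; ring⟩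
  have a2 := sqn_eig B i j e2 l2 N ⟨C ((l2 - l1) * q.eval l2)⁻¹, by rw [hp, he2]; ring⟩
  have a3 := sqn_add B i j (1 - e1 - e2) (e1 + e2) N
  rw [sqn_add B i j e1 e2, a1, a2, show (1 - e1 - e2) + (e1 + e2) = 1 by ring, a0] at a3
  linear_combination -a3

/-- real version -/
lemma asym_real (A : Matrix (Fin n) (Fin n) ℤ) (lam : ℂ)
    (hroot : lam ∈ ((A.map (Int.cast : ℤ → ℂ)).charpoly).roots)
    (hsimple : ((A.map (Int.cast : ℤ → ℂ)).charpoly).roots.count lam = 1)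
    (him : lam.im ≠ 0)
    (hdom : ∀ mu ∈ ((A.map (Int.cast : ℤ → ℂ)).charpoly).roots,
      mu ≠ lam → mu ≠ starRingEnd ℂ lam → ‖mu‖ < ‖lam‖) (i j : Fin n) :
    ∃ a : ℂ, Tendsto (fun N : ℕ => (((A ^ N) i j : ℤ) : ℝ) / ‖lam‖ ^ N -
      (a * (lam / ‖lam‖) ^ N).re) atTop (𝓝 0) := by
  have hl0 : lam ≠ 0 := by rintro rfl; simp at him
  have hr : 0 < ‖lam‖ := norm_pos_iff.2 hl0
  have hne : lam ≠ starRingEnd ℂ lam := by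
    intro h
    exact him (Complex.conj_eq_iff_im.1 h.symm)
  set B := A.map (Int.cast : ℤ → ℂ) with hB
  have hcount : B.charpoly.roots.count (starRingEnd ℂ lam) = 1 := by
    have e : B.charpoly.map (starRingEnd ℂ) = B.charpoly := by
      have : B.charpoly = A.charpoly.map (Int.castRingHom ℂ) := by
        rw [← Matrix.charpoly_map]; rfl
      rw [this, Polynomial.map_map]
      congr 1
      exact RingHom.ext_int _ _
    rw [count_roots] at hsimple ⊢
    rw [← hsimple, eq_rootMultiplicity_map (starRingEnd ℂ).injective lam, e]
  set R := (B.charpoly.roots.erase lam).erase (starRingEnd ℂ lam) with hRdef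
  have c1 : lam ∉ R := by
    rw [← Multiset.count_eq_zero, hRdef, Multiset.count_erase_of_ne hne,
      Multiset.count_erase_self, hsimple]
  have c2 : starRingEnd ℂ lam ∉ R := by
    rw [← Multiset.count_eq_zero, hRdef, Multiset.count_erase_self,
      Multiset.count_erase_of_ne hne.symm, hcount]
  have hroots : B.charpoly.roots = lam ::ₘ (starRingEnd ℂ lam) ::ₘ R := by
    rw [hRdef, Multiset.cons_erase, Multiset.cons_erase hroot]
    rw [← Multiset.count_pos, Multiset.count_erase_of_ne hne.symm, hcount]
    exact one_pos
  have hR : ∀ mu ∈ R, ‖mu‖ < ‖lam‖ := by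
    intro mu hmu
    refine hdom mu ?_ (fun h => c1 (h ▸ hmu)) (fun h => c2 (h ▸ hmu))
    exact Multiset.mem_of_mem_erase (Multiset.mem_of_mem_erase hmu)
  obtain ⟨a, b, hab⟩ := asym B lam _ hne ‖lam‖ hr R hR c1 c2 hroots i j
  refine ⟨a + starRingEnd ℂ b, ?_⟩
  have h := (Complex.continuous_re.tendsto 0).comp hab
  rw [Complex.zero_re] at h
  refine h.congr fun N => ?_
  have e1 : (B ^ N) i j = (((A ^ N) i j : ℤ) : ℂ) := by
    have := Matrix.map_pow A (Int.castRingHom ℂ) N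
    have := congrFun (congrFun this i) j
    simpa [hB] using this.symm
  have e2 : (b * (starRingEnd ℂ lam) ^ N).re = (starRingEnd ℂ b * lam ^ N).re := by
    rw [← Complex.conj_re]; simp
  simp only [Function.comp]
  rw [e1, ← Complex.ofReal_pow, Complex.div_ofReal_re, div_pow, ← Complex.ofReal_pow,
    ← mul_div_assoc, Complex.div_ofReal_re, Complex.sub_re, Complex.add_re, e2, add_mul,
    Complex.add_re, Complex.intCast_re, sub_div]

lemma coeff_ne (A : Matrix (Fin n) (Fin n) ℤ) (lam : ℂ)
    (hroot : lam ∈ ((A.map (Int.cast : ℤ → ℂ)).charpoly).roots) (hl0 : lam ≠ 0)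
    (h : ∀ i j, Tendsto (fun N : ℕ => (((A ^ N) i j : ℤ) : ℝ) / ‖lam‖ ^ N) atTop (𝓝 0)) :
    False := by
  set B := A.map (Int.cast : ℤ → ℂ) with hB
  have hr : 0 < ‖lam‖ := norm_pos_iff.2 hl0
  have hdet : (Matrix.scalar (Fin n) lam - B).det = 0 := by
    have := (mem_roots'.1 hroot).2
    rwa [IsRoot.def, Matrix.eval_charpoly] at this
  obtain ⟨v, hv, hv2⟩ := Matrix.exists_mulVec_eq_zero_iff.2 hdet
  have hBv : B *ᵥ v = lam • v := by
    rw [sub_mulVec, sub_eq_zero] at hv2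
    rw [← hv2]; simp [Matrix.scalar_apply, Matrix.diagonal_const_mulVec]
  have hBN : ∀ N : ℕ, (B ^ N) *ᵥ v = lam ^ N • v := by
    intro N
    induction N with
    | zero => simp
    | succ N ih => rw [pow_succ, ← mulVec_mulVec, hBv, mulVec_smul, ih, smul_smul, pow_succ, mul_comm]
  obtain ⟨i, hi⟩ := Function.ne_iff.1 hv
  have e1 : ∀ N j, (B ^ N) i j = (((A ^ N) i j : ℤ) : ℂ) := by
    intro N j
    have := Matrix.map_pow A (Int.castRingHom ℂ) N
    have := congrFun (congrFun this i) j
    simpa [hB] using this.symm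
  have h1 : Tendsto (fun N : ℕ => ∑ j, (((((A ^ N) i j : ℤ) : ℝ) / ‖lam‖ ^ N : ℝ) : ℂ) * v j)
      atTop (𝓝 (∑ j : Fin n, ((0 : ℝ) : ℂ) * v j)) := by
    refine tendsto_finsetSum _ fun j _ => ?_
    exact ((Complex.continuous_ofReal.tendsto 0).comp (h i j)).mul_const _
  have h2 : ∀ N : ℕ, ∑ j, (((((A ^ N) i j : ℤ) : ℝ) / ‖lam‖ ^ N : ℝ) : ℂ) * v j
      = (lam / ‖lam‖) ^ N * v i := by
    intro N
    have := congrFun (hBN N) i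
    simp only [mulVec, dotProduct, e1, Pi.smul_apply, smul_eq_mul] at this
    rw [div_pow, div_mul_eq_mul_div, ← this, Finset.sum_div]
    refine Finset.sum_congr rfl fun j _ => ?_
    push_cast
    ring
  simp only [h2] at h1
  have h3 := h1.norm
  have hu : ‖lam / (‖lam‖ : ℂ)‖ = 1 := by
    rw [norm_div, Complex.norm_real, norm_norm, div_self hr.ne']
  simp only [norm_mul, norm_pow, hu] at h3
  simp at h3
  exact hi h3
end

/-! the degree functional over the reals -/
noncomputable def Dre {n : ℕ} (M : Fin n → Fin n → ℝ) : ℝ :=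
  (∑ j : Fin n, Finset.univ.fold max 0 (fun i : Fin n => -M i j)) +
    Finset.univ.fold max 0 (fun i : Fin n => ∑ j : Fin n, M i j)

lemma fold_cast {ι : Type*} (s : Finset ι) (f : ι → ℤ) :
    ((s.fold max 0 f : ℤ) : ℝ) = s.fold max 0 (fun i => (f i : ℝ)) := by
  classical
  induction s using Finset.induction_on with
  | empty => simp
  | insert a s ha ih => rw [Finset.fold_insert ha, Finset.fold_insert ha, Int.cast_max, ih]

lemma fold_smul {ι : Type*} (s : Finset ι) (f : ι → ℝ) (t : ℝ) (ht : 0 ≤ t) :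
    s.fold max 0 (fun i => t * f i) = t * s.fold max 0 f := by
  classical
  induction s using Finset.induction_on with
  | empty => simp
  | insert a s ha ih => rw [Finset.fold_insert ha, Finset.fold_insert ha, ih, mul_max_of_nonneg _ _ ht]

lemma fold_tendsto {ι α : Type*} (l : Filter α) (s : Finset ι) (f : α → ι → ℝ) (g : ι → ℝ)
    (h : ∀ i, Filter.Tendsto (fun x => f x i) l (nhds (g i))) :
    Filter.Tendsto (fun x => s.fold max 0 (f x)) l (nhds (s.fold max 0 g)) := by
  classical
  induction s using Finset.induction_on with
  | empty => simpa using tendsto_const_nhds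
  | insert a s ha ih => simpa only [Finset.fold_insert ha] using (h a).max ih

lemma fold_nonneg {ι : Type*} (s : Finset ι) (f : ι → ℝ) : 0 ≤ s.fold max 0 f := by
  rw [Finset.le_fold_max]; exact Or.inl le_rfl

lemma le_fold {ι : Type*} (s : Finset ι) (f : ι → ℝ) (i : ι) (hi : i ∈ s) :
    f i ≤ s.fold max 0 f := by
  rw [Finset.le_fold_max]; exact Or.inr ⟨i, hi, le_rfl⟩

lemma Dre_cast {n : ℕ} (M : Matrix (Fin n) (Fin n) ℤ) :
    (Dmat M : ℝ) = Dre (fun i j => (M i j : ℝ)) := by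
  simp [Dmat, Dre, fold_cast]

lemma Dre_smul {n : ℕ} (M : Fin n → Fin n → ℝ) (t : ℝ) (ht : 0 ≤ t) :
    Dre (fun i j => t * M i j) = t * Dre M := by
  simp only [Dre, ← Finset.mul_sum, ← mul_neg, fold_smul _ _ _ ht, mul_add]

lemma Dre_tendsto {n : ℕ} {α : Type*} (l : Filter α) (f : α → Fin n → Fin n → ℝ)
    (g : Fin n → Fin n → ℝ) (h : ∀ i j, Filter.Tendsto (fun x => f x i j) l (nhds (g i j))) :
    Filter.Tendsto (fun x => Dre (f x)) l (nhds (Dre g)) := by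
  refine Filter.Tendsto.add (tendsto_finsetSum _ fun j _ => ?_) ?_
  · exact fold_tendsto l _ _ _ fun i => (h i j).neg
  · exact fold_tendsto l _ _ _ fun i => tendsto_finsetSum _ fun j _ => h i j

noncomputable def linf (a : ℂ) : ℂ →L[ℝ] ℝ := Complex.reCLM.comp (ContinuousLinearMap.mul ℝ ℂ a)

lemma linf_apply (a z : ℂ) : linf a z = (a * z).re := by simp [linf]

noncomputable def hfun {n : ℕ} (a : Fin n → Fin n → ℂ) (z : ℂ) : ℝ :=
  Dre (fun i j => (a i j * z).re)

lemma hfun_PL {n : ℕ} (a : Fin n → Fin n → ℂ) : PLf (hfun a) := by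
  refine PLf.add (PLf.sum _ fun j => PLf.fold _ fun i => ?_) (PLf.fold _ fun i => PLf.sum _ fun j => ?_)
  · have := PLf.lin (-(linf (a i j)))
    simpa [linf_apply] using this
  · have := PLf.lin (linf (a i j))
    simpa only [linf_apply] using this

lemma hfun_nonneg {n : ℕ} (a : Fin n → Fin n → ℂ) (z : ℂ) : 0 ≤ hfun a z :=
  add_nonneg (Finset.sum_nonneg fun _ _ => fold_nonneg _ _) (fold_nonneg _ _)

lemma hfun_ne {n : ℕ} (a : Fin n → Fin n → ℂ) (i j : Fin n) (h : a i j ≠ 0) :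
    ∃ z, z ≠ 0 ∧ hfun a z ≠ 0 := by
  refine ⟨-(starRingEnd ℂ (a i j)), by simpa using h, ne_of_gt ?_⟩
  refine add_pos_of_pos_of_nonneg ?_ (fold_nonneg _ _)
  refine Finset.sum_pos' (fun _ _ => fold_nonneg _ _) ⟨j, Finset.mem_univ _, ?_⟩
  refine lt_of_lt_of_le ?_ (le_fold _ _ i (Finset.mem_univ _))
  beta_reduce
  rw [mul_neg, Complex.neg_re, neg_neg, Complex.mul_conj, Complex.ofReal_re]
  exact Complex.normSq_pos.2 h

lemma hfun_smul {n : ℕ} (a : Fin n → Fin n → ℂ) (t : ℝ) (ht : 0 ≤ t) (z : ℂ) :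
    hfun a (t * z) = t * hfun a z := by
  rw [hfun, hfun, ← Dre_smul _ _ ht]
  congr 1
  ext i j
  rw [mul_left_comm, Complex.re_ofReal_mul]

theorem degSeq_no_linear_recurrence_of_dominant_nonreal {n : ℕ} (hn : 1 ≤ n)
    (A : Matrix (Fin n) (Fin n) ℤ) (hA : A.det ≠ 0) (lam : ℂ)
    (hroot : lam ∈ ((A.map (Int.cast : ℤ → ℂ)).charpoly).roots)
    (hsimple : ((A.map (Int.cast : ℤ → ℂ)).charpoly).roots.count lam = 1)
    (him : lam.im ≠ 0)
    (hirr : ∀ m : ℕ, 1 ≤ m → (lam / (‖lam‖ : ℂ)) ^ m ≠ 1)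
    (hdom : ∀ mu ∈ ((A.map (Int.cast : ℤ → ℂ)).charpoly).roots,
      mu ≠ lam → mu ≠ starRingEnd ℂ lam → ‖mu‖ < ‖lam‖) :
    ¬ ∃ k : ℕ, 1 ≤ k ∧ ∃ c : Fin k → ℝ,
      ∀ N : ℕ, ((Dmat (A ^ (N + k)) : ℝ)) =
        ∑ i : Fin k, c i * ((Dmat (A ^ (N + k - 1 - (i : ℕ))) : ℝ)) := by
  rintro ⟨k, hk, c, hrec⟩
  have hl0 : lam ≠ 0 := by rintro rfl; simp at him
  have hr : 0 < ‖lam‖ := norm_pos_iff.2 hl0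
  have hrc : (‖lam‖ : ℂ) ≠ 0 := by exact_mod_cast hr.ne'
  have hu : ‖lam / (‖lam‖ : ℂ)‖ = 1 := by
    rw [norm_div, Complex.norm_real, norm_norm, div_self hr.ne']
  choose a ha using fun i j => asym_real A lam hroot hsimple him hdom i j
  have hane : ∃ i j, a i j ≠ 0 := by
    by_contra! hcon
    refine coeff_ne A lam hroot hl0 fun i j => ?_
    simpa [hcon] using ha i j
  obtain ⟨i₀, j₀, hij⟩ := hane
  obtain ⟨z₀, hz₀, hne⟩ := hfun_ne a i₀ j₀ hij
  have hlim : ∀ z : ℂ, ‖z‖ = 1 → ∃ U : Ultrafilter ℕ, ∀ m : ℕ,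
      Filter.Tendsto (fun N => (Dmat (A ^ (N + m)) : ℝ) / ‖lam‖ ^ N) U
        (nhds (hfun a (lam ^ m * z))) := by
    intro z hz
    obtain ⟨U, hU, hUz⟩ := mapClusterPt_iff_ultrafilter.1 (dns _ z hu hz hirr)
    refine ⟨U, fun m => ?_⟩
    have e : ∀ N : ℕ, (Dmat (A ^ (N + m)) : ℝ) / ‖lam‖ ^ N =
        Dre (fun i j => (‖lam‖ ^ N)⁻¹ * (((A ^ (N + m)) i j : ℤ) : ℝ)) := by
      intro N
      rw [Dre_smul _ _ (by positivity), ← Dre_cast, div_eq_inv_mul]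
    simp only [e]
    refine Dre_tendsto _ _ _ fun i j => ?_
    have h1 : Filter.Tendsto (fun N : ℕ => N + m) U Filter.atTop :=
      (Filter.tendsto_add_atTop_nat m).mono_left hU
    have h2 := ((ha i j).comp h1).const_mul (‖lam‖ ^ m)
    have h3 : Filter.Tendsto (fun N : ℕ => (a i j * (lam ^ m * (lam / (‖lam‖ : ℂ)) ^ N)).re) U
        (nhds (a i j * (lam ^ m * z)).re) :=
      (Complex.continuous_re.tendsto _).comp ((hUz.const_mul _).const_mul _)
    have h4 := h2.add h3
    rw [mul_zero, zero_add] at h4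
    refine h4.congr fun N => ?_
    have e3 : a i j * (lam ^ m * (lam / (‖lam‖ : ℂ)) ^ N) =
        ((‖lam‖ ^ m : ℝ) : ℂ) * (a i j * (lam / (‖lam‖ : ℂ)) ^ (N + m)) := by
      push_cast
      rw [pow_add, div_pow lam _ m]
      field_simp
    simp only [Function.comp]
    rw [e3, Complex.re_ofReal_mul, pow_add ‖lam‖]
    field_simp
    ring
  have heq1 : ∀ z : ℂ, ‖z‖ = 1 → hfun a (lam ^ k * z) =
      ∑ i : Fin k, c i * hfun a (lam ^ (k - 1 - (i : ℕ)) * z) := by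
    intro z hz
    obtain ⟨U, hU⟩ := hlim z hz
    have h1 := tendsto_finsetSum (univ : Finset (Fin k))
      fun i _ => (hU (k - 1 - (i : ℕ))).const_mul (c i)
    refine tendsto_nhds_unique (hU k) (h1.congr fun N => ?_)
    rw [hrec N, Finset.sum_div]
    refine Finset.sum_congr rfl fun i _ => ?_
    have : N + (k - 1 - (i : ℕ)) = N + k - 1 - (i : ℕ) := by have := i.2; omega
    rw [this, mul_div_assoc]
  have heq : ∀ z : ℂ, z ≠ 0 → hfun a (lam ^ k * z) =
      ∑ i : Fin k, c i * hfun a (lam ^ (k - 1 - (i : ℕ)) * z) := by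
    intro z hz
    have hz' : (‖z‖ : ℂ) ≠ 0 := by exact_mod_cast (norm_pos_iff.2 hz).ne'
    have e : ∀ m : ℕ, hfun a (lam ^ m * z) = ‖z‖ * hfun a (lam ^ m * (z / ‖z‖)) := by
      intro m
      rw [← hfun_smul a _ (norm_nonneg z)]
      congr 1
      field_simp
    simp only [e]
    rw [heq1 _ (by rw [norm_div, Complex.norm_real, norm_norm, div_self (norm_pos_iff.2 hz).ne']),
      Finset.mul_sum]
    refine Finset.sum_congr rfl fun i _ => ?_
    ring
  refine no_func_eq (hfun_PL a) (hfun_nonneg a) hz₀ hne lam hl0 ?_ k c heq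
  intro m hm hmim
  apply hirr (2 * m) (by omega)
  have h1 : lam ^ m = (((lam ^ m).re : ℝ) : ℂ) := by
    apply Complex.ext <;> simp [hmim]
  have h2 : ‖lam‖ ^ m = |(lam ^ m).re| := by
    rw [← norm_pow, h1, Complex.norm_real, Complex.ofReal_re, Real.norm_eq_abs]
  have h3 : lam ^ (2 * m) = (‖lam‖ : ℂ) ^ (2 * m) := by
    rw [mul_comm 2 m, pow_mul, pow_mul, h1, ← Complex.ofReal_pow ‖lam‖, h2, ← Complex.ofReal_pow,
      ← Complex.ofReal_pow, sq_abs]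
  rw [div_pow, h3, div_self (pow_ne_zero _ hrc)]
end

section
/- Let A be the 3×3 integer matrix with rows (−1,1,0), (−1,0,1), (1,0,0). Then A has determinant 1 (so A is invertible with integer inverse), and the spectral radius of A⁻¹ equals the square of the spectral radius of A: ρ(A⁻¹) = ρ(A)². (Hence the algebraic entropy of the inverse of the associated monomial map is twice the algebraic entropy of the map itself, so algebraic entropy of a birational map need not equal that of its inverse.) -/
open Matrix

theorem specRad_of_factor {n : ℕ} (A : Matrix (Fin n) (Fin n) ℤ) (a b c : ℂ)
    (h : (A.map (Int.cast : ℤ → ℂ)).charpoly =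
      (Polynomial.X - Polynomial.C a) * (Polynomial.X - Polynomial.C b) *
        (Polynomial.X - Polynomial.C c)) :
    specRad A = max ‖a‖ (max ‖b‖ (max ‖c‖ 0)) := by
  have h2 : (A.map (Int.cast : ℤ → ℂ)).charpoly =
      (({a, b, c} : Multiset ℂ).map (fun z => Polynomial.X - Polynomial.C z)).prod := by
    rw [h]; simp [mul_assoc]
  unfold specRad
  rw [h2, Polynomial.roots_multiset_prod_X_sub_C]
  simp [Multiset.fold_singleton]

theorem poly_factor (p q r a b c : ℂ) (h1 : a + b + c = -p) (h2 : a * b + a * c + b * c = q)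
    (h3 : a * b * c = -r) :
    (Polynomial.X ^ 3 + Polynomial.C p * Polynomial.X ^ 2 + Polynomial.C q * Polynomial.X
      + Polynomial.C r : Polynomial ℂ) =
      (Polynomial.X - Polynomial.C a) * (Polynomial.X - Polynomial.C b) *
        (Polynomial.X - Polynomial.C c) := by
  have hp : p = -(a + b + c) := by rw [h1]; ring
  have hr : r = -(a * b * c) := by rw [h3]; ring
  subst hp hr h2
  simp only [map_neg, map_add, map_mul]
  ring

theorem exists_roots : ∃ a : ℝ, ∃ w v : ℂ, 0 < a ∧ a < 1 ∧ ‖w‖ ^ 2 = a⁻¹ ∧ ‖v‖ = ‖w‖ ∧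
    (a : ℂ) + w + v = -1 ∧ a * w + a * v + w * v = 1 ∧ a * w * v = 1 := by
  obtain ⟨a, ⟨h0, h1⟩, ha⟩ : (0 : ℝ) ∈ (fun t : ℝ => t ^ 3 + t ^ 2 + t - 1) '' Set.Ioo 0 1 := by
    apply intermediate_value_Ioo (by norm_num) (by fun_prop)
    norm_num
  simp only at ha
  have hd : 0 ≤ 4 * (a ^ 2 + a + 1) - (a + 1) ^ 2 := by nlinarith
  set s := Real.sqrt (4 * (a ^ 2 + a + 1) - (a + 1) ^ 2) with hs
  have hs2 : s ^ 2 = 4 * (a ^ 2 + a + 1) - (a + 1) ^ 2 := Real.sq_sqrt hd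
  have hwv : (⟨-(a + 1) / 2, s / 2⟩ : ℂ) * ⟨-(a + 1) / 2, -(s / 2)⟩ = ((a ^ 2 + a + 1 : ℝ) : ℂ) := by
    apply Complex.ext
    · simp only [Complex.mul_re, Complex.ofReal_re]; linarith
    · simp only [Complex.mul_im, Complex.ofReal_im]; ring
  have hsum : (⟨-(a + 1) / 2, s / 2⟩ : ℂ) + ⟨-(a + 1) / 2, -(s / 2)⟩ = ((-(a + 1) : ℝ) : ℂ) := by
    apply Complex.ext <;> simp
  have hac : (a : ℂ) ^ 3 + a ^ 2 + a - 1 = 0 := by exact_mod_cast congrArg (Complex.ofReal) ha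
  refine ⟨a, ⟨-(a + 1) / 2, s / 2⟩, ⟨-(a + 1) / 2, -(s / 2)⟩, h0, h1, ?_, ?_, ?_, ?_, ?_⟩
  · rw [Complex.sq_norm, Complex.normSq_mk]
    apply eq_inv_of_mul_eq_one_left
    have : -(a + 1) / 2 * (-(a + 1) / 2) + s / 2 * (s / 2) = a ^ 2 + a + 1 := by linarith
    rw [this]; linarith
  · rw [← sq_eq_sq₀ (norm_nonneg _) (norm_nonneg _), Complex.sq_norm, Complex.sq_norm,
      Complex.normSq_mk, Complex.normSq_mk]; ring
  · rw [add_assoc, hsum]; push_cast; ring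
  · rw [← mul_add, hsum, hwv]; push_cast; ring
  · rw [mul_assoc, hwv]; push_cast; linear_combination hac

/-- The matrix `A` of the monomial map `(x,y,z) ↦ (y/x, z/x, x)` has determinant `1`,
and the spectral radius of its inverse is the square of its spectral radius; hence the
algebraic entropy of the inverse monomial map is twice that of the map itself. -/
theorem specRad_inv_eq_sq :
    let A : Matrix (Fin 3) (Fin 3) ℤ := !![-1, 1, 0; -1, 0, 1; 1, 0, 0]
    A.det = 1 ∧ specRad (A⁻¹) = (specRad A) ^ 2 := by
  intro A
  refine ⟨by simp [A, Matrix.det_fin_three], ?_⟩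
  have hinv : A⁻¹ = !![0, 0, 1; 1, 0, 1; 0, 1, 1] := by
    apply Matrix.inv_eq_right_inv
    decide
  obtain ⟨a, w, v, h0, h1, hw, hv, e1, e2, e3⟩ := exists_roots
  have hA : specRad A = max ‖(a : ℂ)‖ (max ‖w‖ (max ‖v‖ 0)) := by
    apply specRad_of_factor
    rw [← poly_factor 1 1 (-1) a w v e1 e2 (by rw [e3]; ring)]
    simp [A, Matrix.charpoly, Matrix.charmatrix, Matrix.det_fin_three]
    ring
  have ha0 : (a : ℂ) ≠ 0 := by exact_mod_cast h0.ne'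
  have hw0 : w ≠ 0 := by rintro rfl; simp at e3
  have hv0 : v ≠ 0 := by rintro rfl; simp at e3
  have hB : specRad A⁻¹ = max ‖(a : ℂ)⁻¹‖ (max ‖w⁻¹‖ (max ‖v⁻¹‖ 0)) := by
    apply specRad_of_factor
    have i1 : (a : ℂ)⁻¹ = w * v := by field_simp; linear_combination -e3
    have i2 : w⁻¹ = a * v := by field_simp; linear_combination -e3
    have i3 : v⁻¹ = a * w := by field_simp; linear_combination -e3
    rw [← poly_factor (-1) (-1) (-1) (a : ℂ)⁻¹ w⁻¹ v⁻¹ (by rw [i1, i2, i3]; linear_combination e2)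
      (by rw [i1, i2, i3]; linear_combination e1 + (a + w + v) * (e3))
      (by rw [← mul_inv, ← mul_inv, e3]; simp), hinv]
    simp [Matrix.charpoly, Matrix.charmatrix, Matrix.det_fin_three]
    ring
  have hai : 1 < a⁻¹ := (one_lt_inv₀ h0).2 h1
  have hw1 : 1 < ‖w‖ := by
    by_contra h
    push Not at h
    nlinarith [norm_nonneg w]
  have hwi : ‖w‖⁻¹ < 1 := inv_lt_one_of_one_lt₀ hw1
  have hwi0 : 0 ≤ ‖w‖⁻¹ := by positivity
  rw [hA, hB, norm_inv, norm_inv, norm_inv, hv, Complex.norm_real, Real.norm_of_nonneg h0.le,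
    max_eq_left hwi0, max_self, max_eq_left (by linarith), max_eq_left (norm_nonneg w), max_self,
    max_eq_right (by linarith), hw]
end
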